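/- Assume conditions (Cond1), (CondAttr2) and (CondAttr3). Then the skew product multivalued semiflow Π⁺ on 𝒳⁺ = H⁺ × Σ is dynamically gradient with respect to the disjoint family of isolated weakly invariant sets ℳ = {M₁, M₂}, where M₁ = {(ξ_{M,σ}(0), σ) : σ ∈ Σ} and M₂ = {(0,σ) : σ ∈ Σ}: every bounded complete trajectory Φ of 𝒦⁺ either lies entirely in M₁ or in M₂, or satisfies dist_{𝒳⁺}(Φ(t), M₁) → 0 as t → +∞ and dist_{𝒳⁺}(Φ(t), M₂) → 0 as t → −∞. Hence the global attractor 𝔸⁺ of Π⁺ possesses a gradient structure. -/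

import Mathlib

open MeasureTheory Set

noncomputable section

/-- Lebesgue measure restricted to the spatial interval `(0,1)`. -/
def μ01 : Measure ℝ := volume.restrict (Ioo (0:ℝ) 1)

/-- `H = L²(0,1)`. -/
abbrev Hsp : Type := Lp ℝ 2 μ01

/-- The Heaviside multifunction. -/
def heaviside (s : ℝ) : Set ℝ :=
  if s < 0 then {-1} else if s = 0 then Icc (-1) 1 else {1}

/-- Condition (Cond1). -/
structure Cond1 (b ω : ℝ → ℝ) (b0 b1 ω0 ω1 : ℝ) : Prop where
  contb : Continuous b
  contω : Continuous ω
  b0pos : 0 < b0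
  blb : ∀ t, b0 ≤ b t
  bub : ∀ t, b t ≤ b1
  ω0nonneg : 0 ≤ ω0
  ωlb : ∀ t, ω0 ≤ ω t
  ωub : ∀ t, ω t ≤ ω1

/-- `v ∈ H²(0,1) ∩ H¹₀(0,1)` with (weak) second derivative `w ∈ L²(0,1)`:
`v` has a representative that is continuous on `[0,1]`, vanishes at the boundary,
is differentiable on `(0,1)` and whose derivative is an antiderivative of `w`. -/
def InDomainA (v w : Hsp) : Prop :=
  ∃ vt : ℝ → ℝ, ContinuousOn vt (Icc 0 1) ∧ vt 0 = 0 ∧ vt 1 = 0 ∧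
    (∀ᵐ x ∂μ01, vt x = v x) ∧
    ∃ g : ℝ → ℝ,
      (∀ x ∈ Ioo (0:ℝ) 1, HasDerivAt vt (g x) x) ∧
      ∀ x ∈ Ioo (0:ℝ) 1, ∀ y ∈ Ioo (0:ℝ) 1, g x - g y = ∫ z in y..x, w z

/-- A strong solution of the inclusion on `[τ,∞)`, with explicit data:
`r` is the `L²`-selection, `u'` the time derivative, `uxx` the second spatial derivative. -/
structure IsStrongSolutionWith (b ω : ℝ → ℝ) (τ : ℝ) (u r u' uxx : ℝ → Hsp) : Prop where
  cont : ContinuousOn u (Ici τ)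
  rmem : ∀ T, τ < T → MemLp r 2 (volume.restrict (Ioo τ T))
  sel : ∀ᵐ t ∂(volume.restrict (Ioi τ)), ∀ᵐ x ∂μ01,
      ∃ h ∈ heaviside (u t x), r t x = b t * h + ω t * u t x
  dom : ∀ᵐ t ∂(volume.restrict (Ioi τ)), InDomainA (u t) (uxx t)
  eq : ∀ᵐ t ∂(volume.restrict (Ioi τ)), u' t = r t + uxx t
  fund : ∀ T1 T2 : ℝ, τ < T1 → T1 < T2 →
      IntervalIntegrable u' volume T1 T2 ∧
      ∀ t ∈ Icc T1 T2, u t = u T1 + ∫ s in T1..t, u' s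

/-- A strong solution of the inclusion on `[τ,∞)`. -/
def IsStrongSolution (b ω : ℝ → ℝ) (τ : ℝ) (u : ℝ → Hsp) : Prop :=
  ∃ r u' uxx, IsStrongSolutionWith b ω τ u r u' uxx

/-- The solution is non-negative on `[τ,∞)`. -/
def NonnegOn (u : ℝ → Hsp) (τ : ℝ) : Prop :=
  ∀ t, τ ≤ t → ∀ᵐ x ∂μ01, 0 ≤ u t x

/-- `v` is positive: it has a continuous representative on `[0,1]`
which is strictly positive on `(0,1)`. -/
def IsPositive (v : Hsp) : Prop :=
  ∃ vt : ℝ → ℝ, ContinuousOn vt (Icc 0 1) ∧ (∀ᵐ x ∂μ01, vt x = v x) ∧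
    ∀ x ∈ Ioo (0:ℝ) 1, 0 < vt x


/-- The translation (driving) operator `θ_h` on symbols `σ ∈ C(ℝ,ℝ²)`:
`(θ_h σ)(t) = σ(t+h)`. -/
def translateCM (h : ℝ) (σ : C(ℝ, ℝ × ℝ)) : C(ℝ, ℝ × ℝ) :=
  σ.comp ⟨fun t => t + h, continuous_add_right h⟩

/-- The hull of a symbol `σ₀`: the closure (for the topology of uniform
convergence on compact sets, i.e. the compact-open topology) of its translates. -/
def hullSet (σ0 : C(ℝ, ℝ × ℝ)) : Set C(ℝ, ℝ × ℝ) :=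
  closure {σ | ∃ h : ℝ, σ = translateCM h σ0}

/-- The multivalued process associated with the symbol `σ`:
`U_σ(t,τ,x) = {u(t) : u ∈ 𝒟_{τ,σ}(x)}`. -/
def Usol (σ : C(ℝ, ℝ × ℝ)) (t τ : ℝ) (x : Hsp) : Set Hsp :=
  {y | ∃ u : ℝ → Hsp,
      IsStrongSolution (fun s => (σ s).1) (fun s => (σ s).2) τ u ∧
      u τ = x ∧ y = u t}


/-- A bounded non-negative complete trajectory of the inclusion with symbol `σ`. -/
def IsNonnegCompleteTraj (σ : C(ℝ, ℝ × ℝ)) (γ : ℝ → Hsp) : Prop :=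
  (∀ τ : ℝ, IsStrongSolution (fun s => (σ s).1) (fun s => (σ s).2) τ γ) ∧
  ∀ t : ℝ, ∀ᵐ x ∂μ01, 0 ≤ γ t x

/-- A bounded function into `H`. -/
def BddTraj (φ : ℝ → Hsp) : Prop := ∃ M : ℝ, ∀ t : ℝ, ‖φ t‖ ≤ M


structure DomData (Z G w : ℝ → ℝ) : Prop where
  cont : ContinuousOn Z (Icc 0 1)
  der : ∀ x ∈ Ioo (0:ℝ) 1, HasDerivAt Z (G x) x
  ac : AbsolutelyContinuousOnInterval G 0 1
  derG : ∀ᵐ x ∂μ01, HasDerivAt G (w x) x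

lemma DomData.sub {Z G w Z' G' w' : ℝ → ℝ} (h : DomData Z G w) (h' : DomData Z' G' w') :
    DomData (fun x => Z x - Z' x) (fun x => G x - G' x) (fun x => w x - w' x) where
  cont := h.cont.sub h'.cont
  der x hx := (h.der x hx).sub (h'.der x hx)
  ac := h.ac.sub h'.ac
  derG := by filter_upwards [h.derG, h'.derG] with x a b using a.sub b

lemma DomData.congr_w {Z G w w' : ℝ → ℝ} (h : DomData Z G w) (hw : w =ᵐ[μ01] w') :
    DomData Z G w' where
  cont := h.cont
  der := h.der
  ac := h.ac
  derG := by filter_upwards [h.derG, hw] with x a b using b ▸ a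

instance : IsFiniteMeasure μ01 := by unfold μ01; infer_instance
instance : IsProbabilityMeasure μ01 := ⟨by simp [μ01]⟩

lemma integral_μ01 (f : ℝ → ℝ) : ∫ x, f x ∂μ01 = ∫ x in (0:ℝ)..1, f x := by
  rw [intervalIntegral.integral_of_le zero_le_one, μ01, integral_Ioc_eq_integral_Ioo]

lemma ae_μ01 {p : ℝ → Prop} : (∀ᵐ x ∂μ01, p x) ↔ ∀ᵐ x, x ∈ Ioo (0:ℝ) 1 → p x := by
  rw [μ01, ae_restrict_iff' measurableSet_Ioo]

lemma ae_uIoc {p : ℝ → Prop} (h : ∀ᵐ x ∂μ01, p x) : ∀ᵐ x, x ∈ uIoc (0:ℝ) 1 → p x := by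
  rw [ae_μ01] at h
  have h₂ : ∀ᵐ x : ℝ, x ≠ 1 := by simp [ae_iff, measure_singleton]
  filter_upwards [h, h₂] with x a b hx
  rw [uIoc_of_le zero_le_one] at hx
  exact a ⟨hx.1, lt_of_le_of_ne hx.2 b⟩

lemma DomData.lip {Z G w : ℝ → ℝ} (h : DomData Z G w) :
    ∃ K : NNReal, LipschitzOnWith K Z (Icc 0 1) := by
  obtain ⟨C, hC⟩ := h.ac.exists_bound
  have hC0 : 0 ≤ C := le_trans (norm_nonneg _) (hC 0 (by simp))
  refine ⟨⟨C, hC0⟩, ?_⟩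
  have h1 : LipschitzOnWith ⟨C, hC0⟩ Z (Ioo 0 1) := by
    apply (convex_Ioo (0:ℝ) 1).lipschitzOnWith_of_nnnorm_hasDerivWithin_le
      (f' := G) (fun x hx => (h.der x hx).hasDerivWithinAt)
    intro x hx
    have := hC x (by rw [uIcc_of_le zero_le_one]; exact Ioo_subset_Icc_self hx)
    exact_mod_cast this
  have := h1.closure (f := Z) (by rw [closure_Ioo zero_ne_one]; exact h.cont)
  rwa [closure_Ioo zero_ne_one] at this

lemma DomData.pos {Z G w : ℝ → ℝ} (h : DomData Z G w) (h0 : Z 0 ≤ 0) (h1 : Z 1 ≤ 0) :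
    ∫ x, max (Z x) 0 * w x ∂μ01 ≤ 0 := by
  obtain ⟨K, hK⟩ := h.lip
  have hP : AbsolutelyContinuousOnInterval (fun x => max (Z x) 0) 0 1 := by
    have : LipschitzOnWith K (fun x => max (Z x) 0) (uIcc 0 1) := by
      rw [uIcc_of_le zero_le_one]
      have h2 : LipschitzWith 1 (fun x : ℝ => max x 0) := LipschitzWith.id.max_const 0
      simpa [Function.comp_def] using h2.comp_lipschitzOnWith hK
    exact this.absolutelyContinuousOnInterval
  have ibp := hP.integral_mul_deriv_eq_deriv_mul h.ac
  rw [integral_μ01]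
  have e1 : ∫ x in (0:ℝ)..1, max (Z x) 0 * w x = ∫ x in (0:ℝ)..1, max (Z x) 0 * deriv G x := by
    apply intervalIntegral.integral_congr_ae
    filter_upwards [ae_uIoc h.derG] with x hx hx'
    rw [(hx hx').deriv]
  rw [e1, ibp, max_eq_right h0, max_eq_right h1]
  have : 0 ≤ ∫ x in (0:ℝ)..1, deriv (fun x => max (Z x) 0) x * G x := by
    apply intervalIntegral.integral_nonneg_of_ae_restrict zero_le_one
    have := (ae_restrict_iff' (μ := volume) (s := Icc (0:ℝ) 1) measurableSet_Icc
      (p := fun x => 0 ≤ deriv (fun x => max (Z x) 0) x * G x)).2 ?_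
    · exact this
    have h₁ : ∀ᵐ x : ℝ, x ≠ 1 := by simp [ae_iff, measure_singleton]
    have h₂ : ∀ᵐ x : ℝ, x ≠ 0 := by simp [ae_iff, measure_singleton]
    filter_upwards [h₁, h₂] with x a b hx
    have hx' : x ∈ Ioo (0:ℝ) 1 := ⟨lt_of_le_of_ne hx.1 (Ne.symm b), lt_of_le_of_ne hx.2 a⟩
    have hd := h.der x hx'
    rcases lt_trichotomy (Z x) 0 with hz | hz | hz
    · have : (fun x => max (Z x) 0) =ᶠ[nhds x] fun _ => 0 := by
        filter_upwards [hd.continuousAt.eventually (gt_mem_nhds hz)] with y hy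
        exact max_eq_right hy.le
      rw [this.deriv_eq]; simp
    · have : IsLocalMin (fun x => max (Z x) 0) x := by
        filter_upwards with y
        simp [hz]
      rw [this.deriv_eq_zero]; simp
    · have : (fun x => max (Z x) 0) =ᶠ[nhds x] Z := by
        filter_upwards [hd.continuousAt.eventually (lt_mem_nhds hz)] with y hy
        exact max_eq_left hy.le
      rw [this.deriv_eq, hd.deriv]; exact mul_self_nonneg _
  linarith

lemma DomData.acZ {Z G w : ℝ → ℝ} (h : DomData Z G w) : AbsolutelyContinuousOnInterval Z 0 1 := by
  obtain ⟨K, hK⟩ := h.lip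
  rw [← uIcc_of_le zero_le_one] at hK
  exact hK.absolutelyContinuousOnInterval

lemma DomData.derivZ {Z G w : ℝ → ℝ} (h : DomData Z G w) :
    ∀ᵐ x, x ∈ uIoc (0:ℝ) 1 → deriv Z x = G x := by
  apply ae_uIoc
  rw [ae_μ01]
  exact Filter.Eventually.of_forall fun x hx => (h.der x hx).deriv

lemma DomData.sin {Z G w : ℝ → ℝ} (h : DomData Z G w) (h0 : Z 0 = 0) (h1 : Z 1 = 0) :
    ∫ x, Real.sin (Real.pi * x) * w x ∂μ01 = - Real.pi^2 * ∫ x, Real.sin (Real.pi * x) * Z x ∂μ01 := by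
  have hS : AbsolutelyContinuousOnInterval (fun x => Real.sin (Real.pi * x)) 0 1 :=
    ContDiffOn.absolutelyContinuousOnInterval (by fun_prop)
  have hCo : AbsolutelyContinuousOnInterval (fun x => Real.pi * Real.cos (Real.pi * x)) 0 1 :=
    ContDiffOn.absolutelyContinuousOnInterval (by fun_prop)
  have dS : ∀ x, deriv (fun x => Real.sin (Real.pi * x)) x = Real.pi * Real.cos (Real.pi * x) := by
    intro x
    have := ((Real.hasDerivAt_sin (Real.pi * x)).comp x ((hasDerivAt_id x).const_mul Real.pi)).deriv
    simp only [mul_one] at this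
    rw [mul_comm, ← this]; rfl
  have dC : ∀ x, deriv (fun x => Real.pi * Real.cos (Real.pi * x)) x
      = -Real.pi^2 * Real.sin (Real.pi * x) := by
    intro x
    have := (((Real.hasDerivAt_cos (Real.pi * x)).comp x
      ((hasDerivAt_id x).const_mul Real.pi)).const_mul Real.pi).deriv
    simp only [mul_one] at this
    rw [show -Real.pi^2 * Real.sin (Real.pi * x) = Real.pi * (-Real.sin (Real.pi * x) * Real.pi) by ring,
       ← this]; rfl
  have i1 := hS.integral_mul_deriv_eq_deriv_mul h.ac
  have i2 := hCo.integral_mul_deriv_eq_deriv_mul h.acZ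
  simp only [dS, dC] at i1 i2
  rw [integral_μ01, integral_μ01]
  have e1 : ∫ x in (0:ℝ)..1, Real.sin (Real.pi * x) * w x
      = ∫ x in (0:ℝ)..1, Real.sin (Real.pi * x) * deriv G x := by
    apply intervalIntegral.integral_congr_ae
    filter_upwards [ae_uIoc h.derG] with x hx hx'
    rw [(hx hx').deriv]
  have e2 : ∫ x in (0:ℝ)..1, Real.pi * Real.cos (Real.pi * x) * deriv Z x
      = ∫ x in (0:ℝ)..1, Real.pi * Real.cos (Real.pi * x) * G x := by
    apply intervalIntegral.integral_congr_ae
    filter_upwards [h.derivZ] with x hx hx'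
    rw [hx hx']
  rw [e1, i1, ← e2, i2, h0, h1]
  simp [mul_assoc, intervalIntegral.integral_const_mul]

lemma DomData.zero {Z G w : ℝ → ℝ} (h : DomData Z G w) (hZ : ∀ x ∈ Ioo (0:ℝ) 1, 0 ≤ Z x) :
    ∀ᵐ x ∂μ01, Z x = 0 → w x = 0 := by
  set S := {x | G x = 0}
  have hc : {x ∈ S | nhdsWithin x (S \ {x}) = ⊥}.Countable := by
    have := countable_setOfPred_isolated_right_within (s := S)
    refine this.mono ?_
    rintro x ⟨hx, hx'⟩
    refine ⟨hx, ?_⟩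
    refine le_bot_iff.1 (hx' ▸ nhdsWithin_mono x ?_)
    rintro y ⟨a, b⟩
    exact ⟨a, ne_of_gt b⟩
  have hae : ∀ᵐ x ∂μ01, x ∉ {x ∈ S | nhdsWithin x (S \ {x}) = ⊥} := by
    rw [ae_μ01]
    filter_upwards [hc.ae_notMem volume] with x hx _ using hx
  have hI : ∀ᵐ x ∂μ01, x ∈ Ioo (0:ℝ) 1 := by rw [ae_μ01]; simp
  filter_upwards [hae, hI, h.derG] with x hx hxI hd hz
  have hG : G x = 0 := by
    have : IsLocalMin Z x := by
      filter_upwards [isOpen_Ioo.mem_nhds hxI] with y hy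
      rw [hz]; exact hZ y hy
    exact this.hasDerivAt_eq_zero (h.der x hxI)
  have hne : (nhdsWithin x (S \ {x})).NeBot := ⟨fun h' => hx ⟨hG, h'⟩⟩
  have t1 := (hasDerivAt_iff_tendsto_slope.1 hd).mono_left
    (nhdsWithin_mono x (show S \ {x} ⊆ {x}ᶜ from fun y hy => hy.2))
  have t2 : Filter.Tendsto (slope G x) (nhdsWithin x (S \ {x})) (nhds 0) := by
    apply tendsto_const_nhds.congr'
    filter_upwards [self_mem_nhdsWithin] with y hy
    have : G y = 0 := hy.1
    simp [slope, this, hG]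
  exact tendsto_nhds_unique t1 t2


lemma sin_lower {x : ℝ} (hx : x ∈ Icc (0:ℝ) 1) : 2 * min x (1 - x) ≤ Real.sin (Real.pi * x) := by
  have hp := Real.pi_pos
  rcases le_total x (1/2) with h | h
  · have := Real.mul_le_sin (x := Real.pi * x) (by nlinarith [hx.1]) (by nlinarith)
    have e : 2 / Real.pi * (Real.pi * x) = 2 * x := by field_simp
    rw [e] at this
    linarith [min_le_left x (1-x)]
  · have := Real.mul_le_sin (x := Real.pi * (1 - x)) (by nlinarith [hx.2]) (by nlinarith)
    have e : 2 / Real.pi * (Real.pi * (1-x)) = 2 * (1-x) := by field_simp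
    rw [e, show Real.pi * (1-x) = Real.pi - Real.pi * x by ring, Real.sin_pi_sub] at this
    linarith [min_le_right x (1-x)]

lemma cot_cont {Z : ℝ → ℝ} {K : NNReal} (hK : LipschitzOnWith K Z (Icc 0 1))
    (h0 : Z 0 = 0) (h1 : Z 1 = 0) :
    ContinuousOn (fun x => Real.pi * (Real.cos (Real.pi * x) / Real.sin (Real.pi * x)) * Z x ^ 2)
      (Icc 0 1) := by
  have hp := Real.pi_pos
  have bd : ∀ x ∈ Icc (0:ℝ) 1,
      ‖Real.pi * (Real.cos (Real.pi * x) / Real.sin (Real.pi * x)) * Z x ^ 2‖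
        ≤ Real.pi * K^2 * min x (1-x) := by
    intro x hx
    have hm0 : 0 ≤ min x (1-x) := le_min hx.1 (by linarith [hx.2])
    have hZ : |Z x| ≤ K * min x (1-x) := by
      have a := hK.dist_le_mul x hx 0 (by simp)
      have b := hK.dist_le_mul x hx 1 (by simp)
      rw [Real.dist_eq, Real.dist_eq, h0, sub_zero, sub_zero, abs_of_nonneg hx.1] at a
      rw [Real.dist_eq, Real.dist_eq, h1, sub_zero, abs_sub_comm, abs_of_nonneg (by linarith [hx.2] : 0 ≤ 1 - x)] at b
      rcases min_choice x (1-x) with h | h <;> rw [h] <;> assumption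
    have hs := sin_lower hx
    rcases hm0.eq_or_lt with hm | hm
    · rw [← hm] at hZ ⊢
      have : Z x = 0 := by simpa using hZ
      simp [this]
    · have hspos : 0 < Real.sin (Real.pi * x) := by linarith
      rw [norm_mul, norm_mul, norm_div, Real.norm_eq_abs, Real.norm_eq_abs, Real.norm_eq_abs, Real.norm_eq_abs,
        abs_of_pos hp, abs_of_pos hspos, mul_assoc, mul_assoc]
      apply mul_le_mul_of_nonneg_left _ hp.le
      rw [div_mul_eq_mul_div, div_le_iff₀ hspos]
      have hc := Real.abs_cos_le_one (Real.pi * x)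
      have hz2 : |Z x ^ 2| ≤ (K * min x (1-x))^2 := by
        rw [abs_pow]; gcongr
      have : |Real.cos (Real.pi * x)| * |Z x ^ 2| ≤ 1 * (K * min x (1-x))^2 :=
        mul_le_mul hc hz2 (abs_nonneg _) zero_le_one
      have k : (0:ℝ) ≤ K^2 * min x (1-x) := by positivity
      nlinarith
  intro x hx
  by_cases hxi : x ∈ Ioo (0:ℝ) 1
  · have hs : Real.sin (Real.pi * x) ≠ 0 := by
      apply ne_of_gt; apply Real.sin_pos_of_pos_of_lt_pi <;> nlinarith [hxi.1, hxi.2]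
    apply ContinuousWithinAt.mul
    · apply ContinuousAt.continuousWithinAt
      fun_prop (disch := assumption)
    · exact (hK.continuousOn x hx).pow 2
  · have hm : min x (1-x) = 0 := by
      rw [mem_Ioo, not_and_or, not_lt, not_lt] at hxi
      rcases hxi with h | h
      · have : x = 0 := le_antisymm h hx.1
        simp [this]
      · have : x = 1 := le_antisymm hx.2 h
        simp [this]
    have hv := bd x hx
    rw [hm, mul_zero, norm_le_zero_iff] at hv
    unfold ContinuousWithinAt
    beta_reduce
    rw [hv]
    apply squeeze_zero_norm' (a := fun x => Real.pi * K^2 * min x (1-x))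
    · filter_upwards [self_mem_nhdsWithin] with y hy using bd y hy
    · have : Continuous (fun x : ℝ => Real.pi * K^2 * min x (1-x)) := by fun_prop
      have := (this.tendsto x).mono_left (nhdsWithin_le_nhds (s := Icc 0 1))
      simpa [hm] using this

lemma DomData.poincare {Z G w : ℝ → ℝ} (h : DomData Z G w) (h0 : Z 0 = 0) (h1 : Z 1 = 0) :
    ∫ x, Z x * w x ∂μ01 ≤ - Real.pi^2 * ∫ x, Z x ^ 2 ∂μ01 := by
  have hp := Real.pi_pos
  obtain ⟨K, hK⟩ := h.lip
  have hGc : ContinuousOn G (Icc 0 1) := by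
    have := h.ac.continuousOn; rwa [uIcc_of_le zero_le_one] at this
  have hB := cot_cont hK h0 h1
  have hf : ContinuousOn (fun x => G x ^2 - Real.pi^2 * Z x^2) (Icc 0 1) :=
    (hGc.pow 2).sub ((h.cont.pow 2).const_smul (Real.pi^2))
  have hfi : IntervalIntegrable (fun x => G x ^2 - Real.pi^2 * Z x^2) volume 0 1 := by
    apply ContinuousOn.intervalIntegrable; rwa [uIcc_of_le zero_le_one]
  have hmono : MonotoneOn (fun x => (∫ y in (0:ℝ)..x, (G y ^2 - Real.pi^2 * Z y^2)) -
      Real.pi * (Real.cos (Real.pi * x) / Real.sin (Real.pi * x)) * Z x ^ 2) (Icc 0 1) := by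
    have hder : ∀ x ∈ Ioo (0:ℝ) 1, HasDerivAt (fun x => (∫ y in (0:ℝ)..x, (G y ^2 - Real.pi^2 * Z y^2)) -
      Real.pi * (Real.cos (Real.pi * x) / Real.sin (Real.pi * x)) * Z x ^ 2)
        ((G x - Real.pi * (Real.cos (Real.pi * x) / Real.sin (Real.pi * x)) * Z x)^2) x := by
      intro x hx
      have hs : Real.sin (Real.pi * x) ≠ 0 := by
        apply ne_of_gt; apply Real.sin_pos_of_pos_of_lt_pi <;> nlinarith [hx.1, hx.2]
      have d1 : HasDerivAt (fun x => (∫ y in (0:ℝ)..x, (G y ^2 - Real.pi^2 * Z y^2)))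
          (G x ^2 - Real.pi^2 * Z x^2) x := by
        apply intervalIntegral.integral_hasDerivAt_right
        · apply hfi.mono_set
          rw [uIcc_of_le hx.1.le, uIcc_of_le zero_le_one]
          exact Icc_subset_Icc le_rfl hx.2.le
        · exact ContinuousOn.stronglyMeasurableAtFilter isOpen_Ioo (hf.mono Ioo_subset_Icc_self) x hx
        · exact hf.continuousAt (Icc_mem_nhds hx.1 hx.2)
      have dl : HasDerivAt (fun x : ℝ => Real.pi * x) Real.pi x := by
        simpa using (hasDerivAt_id x).const_mul Real.pi
      have d2 := (((dl.cos.div dl.sin hs).const_mul Real.pi).mul ((h.der x hx).pow 2))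
      refine (d1.sub d2).congr_deriv ?_
      have hcs := Real.sin_sq_add_cos_sq (Real.pi * x)
      have hc2 : Real.cos (Real.pi * x)^2 = 1 - Real.sin (Real.pi * x)^2 := by linarith
      simp only [Pi.div_apply, Pi.pow_apply, Nat.cast_ofNat, Nat.add_one_sub_one, pow_one]
      field_simp
      ring
    apply monotoneOn_of_deriv_nonneg (convex_Icc 0 1)
    · apply ContinuousOn.sub _ hB
      have := intervalIntegral.continuousOn_primitive_interval' hfi left_mem_uIcc
      rwa [uIcc_of_le zero_le_one] at this
    · rw [interior_Icc]
      exact fun x hx => (hder x hx).differentiableAt.differentiableWithinAt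
    · rw [interior_Icc]
      intro x hx
      rw [(hder x hx).deriv]; positivity
  have hm := hmono (left_mem_Icc.2 zero_le_one) (right_mem_Icc.2 zero_le_one) zero_le_one
  simp only [h0, h1, intervalIntegral.integral_same] at hm
  have hG2 : IntervalIntegrable (fun x => G x ^2) volume 0 1 := by
    apply ContinuousOn.intervalIntegrable; rw [uIcc_of_le zero_le_one]; exact hGc.pow 2
  have hZ2 : IntervalIntegrable (fun x => Real.pi^2 * Z x ^2) volume 0 1 := by
    apply ContinuousOn.intervalIntegrable; rw [uIcc_of_le zero_le_one]
    exact (h.cont.pow 2).const_smul (Real.pi^2)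
  rw [intervalIntegral.integral_sub hG2 hZ2, intervalIntegral.integral_const_mul] at hm
  have i1 := h.acZ.integral_mul_deriv_eq_deriv_mul h.ac
  have e1 : ∫ x in (0:ℝ)..1, Z x * w x = ∫ x in (0:ℝ)..1, Z x * deriv G x := by
    apply intervalIntegral.integral_congr_ae
    filter_upwards [ae_uIoc h.derG] with x hx hx'
    rw [(hx hx').deriv]
  have e2 : ∫ x in (0:ℝ)..1, deriv Z x * G x = ∫ x in (0:ℝ)..1, G x ^2 := by
    apply intervalIntegral.integral_congr_ae
    filter_upwards [h.derivZ] with x hx hx'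
    rw [hx hx', sq]
  rw [integral_μ01, integral_μ01, e1, i1, e2, h0, h1]
  simp at hm
  linarith

/-- extraction from InDomainA -/
lemma InDomainA.data {v w : Hsp} (h : InDomainA v w) :
    ∃ Z G : ℝ → ℝ, DomData Z G w ∧ Z 0 = 0 ∧ Z 1 = 0 ∧ ∀ᵐ x ∂μ01, Z x = v x := by
  obtain ⟨Z, hc, h0, h1, hae, g, hg, hgw⟩ := h
  have hwi : IntervalIntegrable (fun x => w x) volume 0 1 := by
    rw [intervalIntegrable_iff_integrableOn_Ioo_of_le zero_le_one]
    exact (Lp.memLp w).integrable (by norm_num)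
  have hhalf : (1/2 : ℝ) ∈ uIcc (0:ℝ) 1 := by rw [uIcc_of_le zero_le_one]; norm_num
  refine ⟨Z, fun x => (∫ z in (1/2:ℝ)..x, w z) + g (1/2), ⟨hc, ?_, ?_, ?_⟩, h0, h1, hae⟩
  · intro x hx
    have := hgw x hx (1/2) (by norm_num)
    rw [← this]; simpa using hg x hx
  · apply (hwi.absolutelyContinuousOnInterval_intervalIntegral hhalf).add
    exact (LipschitzWith.const (g (1/2))).lipschitzOnWith.absolutelyContinuousOnInterval
  · rw [ae_μ01]
    filter_upwards [hwi.ae_hasDerivAt_integral] with x hx hx'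
    have := hx (by rw [uIcc_of_le zero_le_one]; exact Ioo_subset_Icc_self hx') _ hhalf
    simpa using this.add_const (g (1/2))



structure IsPath (u u' : ℝ → Hsp) (a b : ℝ) : Prop where
  lt : a < b
  int : IntervalIntegrable u' volume a b
  eq : ∀ t ∈ Icc a b, u t = u a + ∫ s in a..t, u' s

lemma IsPath.deriv {u u' : ℝ → Hsp} {a b : ℝ} (h : IsPath u u' a b) :
    ∀ᵐ t, t ∈ Ioo a b → HasDerivAt u (u' t) t := by
  filter_upwards [h.int.ae_hasDerivAt_integral] with t ht hti
  have h1 := (ht (by rw [uIcc_of_le h.lt.le]; exact Ioo_subset_Icc_self hti) a left_mem_uIcc).const_add (u a)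
  apply h1.congr_of_eventuallyEq
  filter_upwards [Icc_mem_nhds hti.1 hti.2] with s hs using h.eq s hs

lemma IsPath.dom {u u' : ℝ → Hsp} {a b : ℝ} (h : IsPath u u' a b) :
    ∃ Φ : ℝ → ℝ, AbsolutelyContinuousOnInterval Φ a b ∧
      ∀ s ∈ Icc a b, ∀ t ∈ Icc a b, dist (u s) (u t) ≤ dist (Φ s) (Φ t) := by
  refine ⟨fun x => ∫ s in a..x, ‖u' s‖,
    h.int.norm.absolutelyContinuousOnInterval_intervalIntegral left_mem_uIcc, ?_⟩
  intro s hs t ht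
  have sub : ∀ x ∈ Icc a b, IntervalIntegrable u' volume a x := by
    intro x hx
    apply h.int.mono_set
    rw [uIcc_of_le hx.1, uIcc_of_le h.lt.le]; exact Icc_subset_Icc le_rfl hx.2
  rw [h.eq s hs, h.eq t ht, dist_add_left, dist_eq_norm, dist_eq_norm,
    intervalIntegral.integral_interval_sub_left (sub s hs) (sub t ht),
    intervalIntegral.integral_interval_sub_left (sub s hs).norm (sub t ht).norm]
  exact intervalIntegral.norm_integral_le_abs_integral_norm

lemma IsPath.sub {u u' v v' : ℝ → Hsp} {a b : ℝ} (h : IsPath u u' a b) (k : IsPath v v' a b) :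
    IsPath (fun t => u t - v t) (fun t => u' t - v' t) a b where
  lt := h.lt
  int := h.int.sub k.int
  eq t ht := by
    have sub : ∀ {w : ℝ → Hsp}, IntervalIntegrable w volume a b → IntervalIntegrable w volume a t := by
      intro w hw
      apply hw.mono_set
      rw [uIcc_of_le ht.1, uIcc_of_le h.lt.le]; exact Icc_subset_Icc le_rfl ht.2
    rw [intervalIntegral.integral_sub (sub h.int) (sub k.int), h.eq t ht, k.eq t ht]
    abel

lemma ac_of_dom {X : Type*} [PseudoMetricSpace X] {f : ℝ → X} {Φ : ℝ → ℝ} {a b : ℝ} (hab : a ≤ b)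
    (hΦ : AbsolutelyContinuousOnInterval Φ a b)
    (h : ∀ s ∈ Icc a b, ∀ t ∈ Icc a b, dist (f s) (f t) ≤ dist (Φ s) (Φ t)) :
    AbsolutelyContinuousOnInterval f a b := by
  rw [absolutelyContinuousOnInterval_iff] at hΦ ⊢
  intro ε hε
  obtain ⟨δ, hδ, H⟩ := hΦ ε hε
  refine ⟨δ, hδ, fun E hE hE' => lt_of_le_of_lt (Finset.sum_le_sum fun i hi => ?_) (H E hE hE')⟩
  have := hE.1 i hi
  rw [uIcc_of_le hab] at this
  exact h _ this.1 _ this.2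

lemma IsPath.ac {u u' : ℝ → Hsp} {a b : ℝ} (h : IsPath u u' a b) :
    AbsolutelyContinuousOnInterval u a b := by
  obtain ⟨Φ, h1, h2⟩ := h.dom
  exact ac_of_dom h.lt.le h1 h2

lemma ac_lip {X Y : Type*} [PseudoMetricSpace X] [PseudoMetricSpace Y] {f : ℝ → X} {g : X → Y}
    {a b : ℝ} (hf : AbsolutelyContinuousOnInterval f a b) (hg : ∀ x y, dist (g x) (g y) ≤ dist x y) :
    AbsolutelyContinuousOnInterval (fun t => g (f t)) a b := by
  rw [absolutelyContinuousOnInterval_iff] at hf ⊢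
  intro ε hε
  obtain ⟨δ, hδ, H⟩ := hf ε hε
  exact ⟨δ, hδ, fun E hE hE' => lt_of_le_of_lt (Finset.sum_le_sum fun i hi => hg _ _) (H E hE hE')⟩

lemma ac_le {f : ℝ → ℝ} {a b : ℝ} (hab : a ≤ b) (hf : AbsolutelyContinuousOnInterval f a b)
    (h : ∀ᵐ t, t ∈ Ioo a b → ∃ f', HasDerivAt f f' t ∧ f' ≤ 0) : f b ≤ f a := by
  have := hf.integral_deriv_eq_sub
  have h2 : ∫ x in a..b, deriv f x ≤ ∫ x in a..b, (0:ℝ) := by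
    apply intervalIntegral.integral_mono_ae_restrict hab hf.intervalIntegrable_deriv (by simp)
    have h₁ : ∀ᵐ x : ℝ, x ≠ a := by simp [ae_iff, measure_singleton]
    have h₂ : ∀ᵐ x : ℝ, x ≠ b := by simp [ae_iff, measure_singleton]
    have := (ae_restrict_iff' (μ := volume) (s := Icc a b) measurableSet_Icc
      (p := fun x => deriv f x ≤ 0)).2 ?_
    · exact this
    filter_upwards [h, h₁, h₂] with x hx k1 k2 hx'
    obtain ⟨f', d, hle⟩ := hx ⟨lt_of_le_of_ne hx'.1 (Ne.symm k1), lt_of_le_of_ne hx'.2 k2⟩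
    rw [d.deriv]; exact hle
  simp at h2
  linarith

lemma inner_eq (f g : Hsp) : inner ℝ f g = ∫ x, f x * g x ∂μ01 := by
  rw [L2.inner_def]
  congr 1; ext x; simp [mul_comm]

lemma inner_congr {f g : Hsp} {F G : ℝ → ℝ} (hf : F =ᵐ[μ01] f) (hg : G =ᵐ[μ01] g) :
    inner ℝ f g = ∫ x, F x * G x ∂μ01 := by
  rw [inner_eq]
  apply integral_congr_ae
  filter_upwards [hf, hg] with x a b
  simp only [a, b]

lemma InDomainA.energy {v w : Hsp} (h : InDomainA v w) :
    inner ℝ v w ≤ - Real.pi^2 * ‖v‖^2 := by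
  obtain ⟨Z, G, hd, h0, h1, hae⟩ := h.data
  have := hd.poincare h0 h1
  rw [← real_inner_self_eq_norm_sq, inner_congr hae hae, inner_congr hae (Filter.EventuallyEq.rfl)]
  simpa [sq] using this

lemma InDomainA.sub_energy {v w v' w' : Hsp} (h : InDomainA v w) (h' : InDomainA v' w') :
    inner ℝ (v - v') (w - w') ≤ - Real.pi^2 * ‖v - v'‖^2 := by
  obtain ⟨Z, G, hd, h0, h1, hae⟩ := h.data
  obtain ⟨Z', G', hd', h0', h1', hae'⟩ := h'.data
  have := (hd.sub hd').poincare (by simp [h0, h0']) (by simp [h1, h1'])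
  have e1 : (fun x => Z x - Z' x) =ᵐ[μ01] (v - v' : Hsp) := by
    filter_upwards [hae, hae', Lp.coeFn_sub v v'] with x a b c
    rw [c, a, b]; rfl
  have e2 : (fun x => w x - w' x) =ᵐ[μ01] (w - w' : Hsp) := by
    filter_upwards [Lp.coeFn_sub w w'] with x c
    rw [c]; rfl
  rw [← real_inner_self_eq_norm_sq, inner_congr e1 e1, inner_congr e1 e2]
  simpa [sq] using this

lemma gronwall {w w' F : ℝ → Hsp} {om : ℝ → ℝ} {a b δ ω1 η : ℝ} (h : IsPath w w' a b)
    (hδ : 0 < δ) (hδ' : δ = Real.pi^2 - ω1)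
    (H : ∀ᵐ t, t ∈ Ioo a b → ∃ wxx : Hsp, inner ℝ (w t) wxx ≤ -Real.pi^2 * ‖w t‖^2 ∧
      w' t = wxx + om t • w t + F t ∧ om t ≤ ω1 ∧ ‖F t‖ ≤ η) :
    ‖w b‖^2 ≤ Real.exp (-δ * (b-a)) * ‖w a‖^2 + η^2/δ^2 := by
  have hac : AbsolutelyContinuousOnInterval (fun t => Real.exp (δ * t) * (‖w t‖^2 - η^2/δ^2)) a b := by
    have h1 : AbsolutelyContinuousOnInterval (fun t => Real.exp (δ * t)) a b :=
      ContDiffOn.absolutelyContinuousOnInterval (by fun_prop)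
    have h2 : AbsolutelyContinuousOnInterval (fun t => ‖w t‖) a b :=
      ac_lip h.ac (g := fun x : Hsp => ‖x‖) (fun x y => by
        rw [Real.dist_eq, dist_eq_norm]; exact abs_norm_sub_norm_le x y)
    have h3 := h1.fun_mul ((h2.fun_mul h2).sub
      ((LipschitzWith.const (η^2/δ^2)).lipschitzOnWith.absolutelyContinuousOnInterval))
    convert h3 using 2 with t
    simp [sq]
  have := ac_le h.lt.le hac ?_
  · have e : Real.exp (-δ * (b-a)) * Real.exp (δ * b) = Real.exp (δ * a) := by
      rw [← Real.exp_add]; congr 1; ring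
    rw [← e, mul_comm (Real.exp (-δ * (b-a))), mul_assoc, mul_le_mul_iff_right₀ (Real.exp_pos _)] at this
    have h2 : 0 ≤ Real.exp (-δ * (b-a)) * (η^2/δ^2) := by positivity
    nlinarith
  · filter_upwards [H, h.deriv] with t ht hd hti
    obtain ⟨wxx, e1, e2, e3, e4⟩ := ht hti
    have d1 := (hd hti).norm_sq
    have d2 : HasDerivAt (fun t => Real.exp (δ * t)) (Real.exp (δ * t) * δ) t := by
      simpa using ((hasDerivAt_id t).const_mul δ).exp
    refine ⟨_, d2.mul (d1.sub_const (η^2/δ^2)), ?_⟩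
    have i1 : inner ℝ (w t) (w' t) ≤ -δ * ‖w t‖^2 + η * ‖w t‖ := by
      rw [e2, inner_add_right, inner_add_right, real_inner_smul_right, real_inner_self_eq_norm_sq]
      have c1 := real_inner_le_norm (w t) (F t)
      have c2 : ‖w t‖ * ‖F t‖ ≤ ‖w t‖ * η := by gcongr
      have c3 : om t * ‖w t‖^2 ≤ ω1 * ‖w t‖^2 := by gcongr
      rw [hδ']; linarith
    have key : δ * (‖w t‖^2 - η^2/δ^2) + 2 * inner ℝ (w t) (w' t) ≤ 0 := by
      have : δ * (η^2/δ^2) = η^2/δ := by field_simp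
      have sqr : 2 * (η * ‖w t‖) ≤ δ * ‖w t‖^2 + η^2/δ := by
        have : 0 ≤ (δ * ‖w t‖ - η)^2 / δ := by positivity
        have e : (δ * ‖w t‖ - η)^2 / δ = δ * ‖w t‖^2 + η^2/δ - 2 * (η * ‖w t‖) := by field_simp; ring
        linarith
      nlinarith
    have hp := Real.exp_pos (δ * t)
    nlinarith

def sinB : BoundedContinuousFunction ℝ ℝ :=
  BoundedContinuousFunction.ofNormedAddCommGroup (fun x : ℝ => Real.sin (Real.pi * x)) (by fun_prop) 1
    (fun x => by simpa using Real.abs_sin_le_one _)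

def sinH : Hsp := BoundedContinuousFunction.toLp 2 μ01 ℝ sinB

lemma sinH_ae : (fun x => Real.sin (Real.pi * x)) =ᵐ[μ01] sinH :=
  (BoundedContinuousFunction.coeFn_toLp 2 μ01 ℝ sinB).symm

def oneH : Hsp := BoundedContinuousFunction.toLp 2 μ01 ℝ (BoundedContinuousFunction.const ℝ (1:ℝ))

lemma oneH_ae : (fun _ => (1:ℝ)) =ᵐ[μ01] oneH :=
  (BoundedContinuousFunction.coeFn_toLp 2 μ01 ℝ (BoundedContinuousFunction.const ℝ (1:ℝ))).symm

lemma ae_Ioo : ∀ᵐ x ∂μ01, x ∈ Ioo (0:ℝ) 1 := by rw [ae_μ01]; simp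

lemma sinpos {x : ℝ} (hx : x ∈ Ioo (0:ℝ) 1) : 0 < Real.sin (Real.pi * x) := by
  apply Real.sin_pos_of_pos_of_lt_pi <;> nlinarith [hx.1, hx.2, Real.pi_pos]

lemma norm_oneH : ‖oneH‖ = 1 := by
  have : ‖oneH‖^2 = 1 := by
    rw [← real_inner_self_eq_norm_sq, inner_congr oneH_ae oneH_ae]; simp
  nlinarith [norm_nonneg oneH]

lemma inner_mono_nonneg {f g : Hsp} (hf : ∀ᵐ x ∂μ01, 0 ≤ f x) (hg : ∀ᵐ x ∂μ01, 0 ≤ g x) :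
    0 ≤ inner ℝ f g := by
  rw [inner_eq]
  apply integral_nonneg_of_ae
  filter_upwards [hf, hg] with x a b using mul_nonneg a b

lemma sinH_nonneg : ∀ᵐ x ∂μ01, 0 ≤ sinH x := by
  filter_upwards [sinH_ae, ae_Ioo] with x a b
  rw [← a]; exact (sinpos b).le

lemma inner_sin_one : 0 < inner ℝ sinH oneH := by
  rw [inner_congr sinH_ae oneH_ae, integral_μ01]
  apply intervalIntegral.intervalIntegral_pos_of_pos_on _ _ zero_lt_one
  · apply Continuous.intervalIntegrable; fun_prop
  · intro x hx; simpa using sinpos hx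

lemma InDomainA.sin {v w : Hsp} (h : InDomainA v w) :
    inner ℝ sinH w = - Real.pi^2 * inner ℝ sinH v := by
  obtain ⟨Z, G, hd, h0, h1, hae⟩ := h.data
  rw [inner_congr sinH_ae hae, inner_congr sinH_ae (Filter.EventuallyEq.rfl)]
  exact hd.sin h0 h1

lemma lower {u u' : ℝ → Hsp} {a b β : ℝ} (h : IsPath u u' a b) (h0 : 0 ≤ inner ℝ sinH (u a)) (hβ : 0 ≤ β)
    (H : ∀ᵐ t, t ∈ Ioo a b → ∃ uxx : Hsp, inner ℝ sinH uxx = - Real.pi^2 * inner ℝ sinH (u t) ∧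
      β ≤ inner ℝ sinH (u' t - uxx)) :
    β / Real.pi^2 * (1 - Real.exp (-Real.pi^2 * (b-a))) ≤ inner ℝ sinH (u b) := by
  have hp := Real.pi_pos
  have hac : AbsolutelyContinuousOnInterval
      (fun t => Real.exp (Real.pi^2 * t) * (β/Real.pi^2 - inner ℝ sinH (u t))) a b := by
    have h1 : AbsolutelyContinuousOnInterval (fun t => Real.exp (Real.pi^2 * t)) a b :=
      ContDiffOn.absolutelyContinuousOnInterval (by fun_prop)
    have h2 : AbsolutelyContinuousOnInterval (fun t => inner ℝ sinH (u t)) a b := by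
      have : AbsolutelyContinuousOnInterval (fun t => ‖sinH‖ • u t) a b := h.ac.const_smul _
      rw [absolutelyContinuousOnInterval_iff] at this ⊢
      intro ε hε
      obtain ⟨δ, hδ, H⟩ := this ε hε
      refine ⟨δ, hδ, fun E hE hE' => lt_of_le_of_lt (Finset.sum_le_sum fun i hi => ?_) (H E hE hE')⟩
      rw [dist_eq_norm, dist_eq_norm, ← inner_sub_right, ← smul_sub, norm_smul, norm_norm]
      exact norm_inner_le_norm _ _
    exact h1.fun_mul (AbsolutelyContinuousOnInterval.sub
      ((LipschitzWith.const (β/Real.pi^2)).lipschitzOnWith.absolutelyContinuousOnInterval) h2)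
  have := ac_le h.lt.le hac ?_
  · have e : Real.exp (-Real.pi^2 * (b-a)) * Real.exp (Real.pi^2 * b) = Real.exp (Real.pi^2 * a) := by
      rw [← Real.exp_add]; congr 1; ring
    rw [← e, mul_comm (Real.exp (-Real.pi^2 * (b-a))), mul_assoc, mul_le_mul_iff_right₀ (Real.exp_pos _)] at this
    have h2 : 0 ≤ Real.exp (-Real.pi^2 * (b-a)) * inner ℝ sinH (u a) := by positivity
    nlinarith
  · filter_upwards [H, h.deriv] with t ht hd hti
    obtain ⟨uxx, e1, e2⟩ := ht hti
    have d1 : HasDerivAt (fun t => inner ℝ sinH (u t)) (inner ℝ sinH (u' t)) t := by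
      simpa using (hasDerivAt_const t sinH).inner ℝ (hd hti)
    have d2 : HasDerivAt (fun t => Real.exp (Real.pi^2 * t)) (Real.exp (Real.pi^2 * t) * Real.pi^2) t := by
      simpa using ((hasDerivAt_id t).const_mul (Real.pi^2)).exp
    refine ⟨_, d2.mul (d1.const_sub (β/Real.pi^2)), ?_⟩
    rw [inner_sub_right, e1] at e2
    have hpp := Real.exp_pos (Real.pi^2 * t)
    have : Real.pi^2 * (β/Real.pi^2) = β := by field_simp
    have k : Real.pi^2 * (β/Real.pi^2 - inner ℝ sinH (u t)) + (- inner ℝ sinH (u' t)) ≤ 0 := by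
      rw [mul_sub, this]; linarith
    nlinarith


lemma pp_sub_le (x y : Hsp) : ‖Lp.posPart x - Lp.posPart y‖ ≤ ‖x - y‖ := by
  apply Lp.norm_le_norm_of_ae_le
  filter_upwards [Lp.coeFn_posPart x, Lp.coeFn_posPart y, Lp.coeFn_sub x y,
    Lp.coeFn_sub (Lp.posPart x) (Lp.posPart y)] with t a b c d
  rw [c, d]
  simp only [Pi.sub_apply, a, b, Real.norm_eq_abs]
  exact abs_max_sub_max_le_abs _ _ _

lemma pp_nonneg (x : Hsp) : ∀ᵐ t ∂μ01, 0 ≤ Lp.posPart x t := by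
  filter_upwards [Lp.coeFn_posPart x] with t a
  rw [a]; exact le_max_right _ _

lemma pp_deriv {z : ℝ → Hsp} {z' : Hsp} {t : ℝ} (hz : HasDerivAt z z' t) :
    HasDerivAt (fun t => ‖Lp.posPart (z t)‖^2) (2 * inner ℝ (Lp.posPart (z t)) z') t := by
  have key : ∀ x h : Hsp, 0 ≤ ‖Lp.posPart (x + h)‖^2 - ‖Lp.posPart x‖^2 - 2 * inner ℝ (Lp.posPart x) h ∧
      ‖Lp.posPart (x + h)‖^2 - ‖Lp.posPart x‖^2 - 2 * inner ℝ (Lp.posPart x) h ≤ ‖h‖^2 := by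
    intro x h
    constructor
    · have h1 : 0 ≤ inner ℝ (Lp.posPart x) (Lp.posPart (x+h) - (x + h)) := by
        apply inner_mono_nonneg (pp_nonneg x)
        filter_upwards [Lp.coeFn_posPart (x+h), Lp.coeFn_sub (Lp.posPart (x+h)) (x+h)] with t a b
        rw [b, Pi.sub_apply, a]
        have := le_max_left ((x+h : Hsp) t) 0
        linarith
      have h2 : inner ℝ (Lp.posPart x) (x - Lp.posPart x) = 0 := by
        rw [inner_eq]
        rw [← integral_zero ℝ ℝ (μ := μ01)]
        apply integral_congr_ae
        filter_upwards [Lp.coeFn_posPart x, Lp.coeFn_sub x (Lp.posPart x)] with t a b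
        rw [b, Pi.sub_apply, a]
        rcases max_cases (x t) 0 with ⟨e, _⟩ | ⟨e, _⟩ <;> rw [e] <;> ring
      have h3 := norm_sub_sq_real (Lp.posPart (x+h)) (Lp.posPart x)
      rw [real_inner_comm] at h3
      rw [inner_sub_right, inner_add_right] at h1
      rw [inner_sub_right, real_inner_self_eq_norm_sq] at h2
      nlinarith [sq_nonneg ‖Lp.posPart (x+h) - Lp.posPart x‖]
    · have h1 : ‖Lp.posPart (x+h)‖ ≤ ‖Lp.posPart x + h‖ := by
        apply Lp.norm_le_norm_of_ae_le
        filter_upwards [Lp.coeFn_posPart (x+h), Lp.coeFn_posPart x, Lp.coeFn_add x h,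
          Lp.coeFn_add (Lp.posPart x) h] with t a b c d
        rw [a, c, d]
        simp only [Pi.add_apply, b, Real.norm_eq_abs]
        rw [abs_of_nonneg (le_max_right _ _)]
        apply max_le _ (abs_nonneg _)
        exact le_trans (by gcongr; exact le_max_left _ _) (le_abs_self _)
      have h2 : ‖Lp.posPart (x+h)‖^2 ≤ ‖Lp.posPart x + h‖^2 := by gcongr
      rw [norm_add_sq_real] at h2
      linarith
  have hF : HasFDerivAt (fun x : Hsp => ‖Lp.posPart x‖^2) ((2:ℝ) • (innerSL ℝ (Lp.posPart (z t)))) (z t) := by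
    rw [hasFDerivAt_iff_isLittleO_nhds_zero]
    refine Asymptotics.IsBigO.trans_isLittleO ?_ (Asymptotics.isLittleO_norm_pow_id (n := 2) (by norm_num))
    apply Asymptotics.IsBigO.of_bound 1
    filter_upwards with h
    have := key (z t) h
    simp only [FunLike.coe_smul, Pi.smul_apply, innerSL_apply_apply, smul_eq_mul]
    rw [Real.norm_eq_abs, abs_of_nonneg this.1, one_mul, norm_pow, norm_norm]
    exact this.2
  have := hF.comp_hasDerivAt t hz
  simpa [Function.comp_def] using this

lemma cmpH {u u' v v' : ℝ → Hsp} {a b : ℝ} (hu : IsPath u u' a b) (hv : IsPath v v' a b)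
    (H : ∀ᵐ t, t ∈ Ioo a b → ∃ zxx ρ : Hsp, inner ℝ (Lp.posPart (v t - u t)) zxx ≤ 0 ∧
      v' t - u' t = zxx + ρ ∧ ∀ᵐ x ∂μ01, ρ x ≤ 0)
    (h0 : ∀ᵐ x ∂μ01, v a x ≤ u a x) : ∀ᵐ x ∂μ01, v b x ≤ u b x := by
  have hz := hv.sub hu
  have a1 : AbsolutelyContinuousOnInterval (fun t => ‖Lp.posPart (v t - u t)‖) a b := by
    apply ac_lip (g := fun x => ‖Lp.posPart x‖) hz.ac
    intro x y
    rw [Real.dist_eq, dist_eq_norm]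
    exact (abs_norm_sub_norm_le _ _).trans (pp_sub_le _ _)
  have a2 : AbsolutelyContinuousOnInterval (fun t => ‖Lp.posPart (v t - u t)‖^2) a b := by
    have := a1.mul a1
    convert this using 1
    ext t
    simp [sq]
  have := ac_le hu.lt.le a2 (by
    filter_upwards [H, hz.deriv] with t h1 h2 ht
    obtain ⟨zxx, ρ, i1, i2, i3⟩ := h1 ht
    refine ⟨_, pp_deriv (h2 ht), ?_⟩
    rw [i2, inner_add_right]
    have : 0 ≤ inner ℝ (Lp.posPart (v t - u t)) (-ρ) := by
      apply inner_mono_nonneg (pp_nonneg _)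
      filter_upwards [i3, Lp.coeFn_neg ρ] with x p q
      rw [q]; simpa using p
    rw [inner_neg_right] at this
    linarith)
  have e0 : Lp.posPart (v a - u a) = 0 := by
    apply Lp.ext
    filter_upwards [h0, Lp.coeFn_posPart (v a - u a), Lp.coeFn_sub (v a) (u a), Lp.coeFn_zero ℝ 2 μ01] with x p q r s
    rw [q, r, s]
    simp [p]
  rw [e0] at this
  have e1 : Lp.posPart (v b - u b) = 0 := by
    have : ‖Lp.posPart (v b - u b)‖ ^2 ≤ 0 := by simpa using this
    have := pow_eq_zero_iff (two_ne_zero) |>.1 (le_antisymm this (sq_nonneg _))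
    exact norm_eq_zero.1 this
  filter_upwards [Lp.coeFn_posPart (v b - u b), Lp.coeFn_sub (v b) (u b), Lp.coeFn_zero ℝ 2 μ01] with x q r s
  rw [e1, s, r] at q
  have := le_max_left ((v b) x - (u b) x) 0
  simp only [Pi.sub_apply, Pi.zero_apply] at q
  linarith

lemma lim_nonneg {P : ℝ → Prop} {f : ℕ → Hsp} {g : Hsp} (h : Filter.Tendsto f Filter.atTop (nhds g))
    (hf : ∀ n, ∀ᵐ x ∂μ01, P x → 0 ≤ f n x) : ∀ᵐ x ∂μ01, P x → 0 ≤ g x := by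
  obtain ⟨ns, _, hns⟩ := (tendstoInMeasure_of_tendsto_Lp h).exists_seq_tendsto_ae
  filter_upwards [hns, ae_all_iff.2 hf] with x hx hx' hP
  exact ge_of_tendsto' hx fun i => hx' _ hP

lemma derH_zero {γ : ℝ → Hsp} {γ' : Hsp} {t : ℝ} (h : HasDerivAt γ γ' t)
    (hγ : ∀ t, ∀ᵐ x ∂μ01, 0 ≤ γ t x) : ∀ᵐ x ∂μ01, γ t x = 0 → γ' x = 0 := by
  have h1 := h.tendsto_slope_zero_right
  have h2 := h.tendsto_slope_zero_left
  have s1 : Filter.Tendsto (fun n : ℕ => (1:ℝ)/((n:ℝ)+1)) Filter.atTop (nhdsWithin 0 (Ioi 0)) := by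
    apply tendsto_nhdsWithin_of_tendsto_nhds_of_eventually_within
    · exact tendsto_one_div_add_atTop_nhds_zero_nat
    · filter_upwards with n; show (0:ℝ) < _; positivity
  have s2 : Filter.Tendsto (fun n : ℕ => -((1:ℝ)/((n:ℝ)+1))) Filter.atTop (nhdsWithin 0 (Iio 0)) := by
    apply tendsto_nhdsWithin_of_tendsto_nhds_of_eventually_within
    · simpa using (tendsto_one_div_add_atTop_nhds_zero_nat (𝕜 := ℝ)).neg
    · filter_upwards with n; show (_:ℝ) < 0; simp; positivity
  have p1 := lim_nonneg (P := fun x => γ t x = 0) (h1.comp s1) (by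
    intro n
    filter_upwards [hγ (t + 1/((n:ℝ)+1)), Lp.coeFn_smul ((1:ℝ)/((n:ℝ)+1))⁻¹ (γ (t + 1/((n:ℝ)+1)) - γ t),
      Lp.coeFn_sub (γ (t + 1/((n:ℝ)+1))) (γ t)] with x a b c h0
    simp only [Function.comp_def]
    rw [b, Pi.smul_apply, c, Pi.sub_apply, h0, sub_zero, smul_eq_mul]
    positivity)
  have p2 := lim_nonneg (P := fun x => γ t x = 0) (h2.comp s2).neg (by
    intro n
    filter_upwards [hγ (t + -(1/((n:ℝ)+1))), Lp.coeFn_smul (-((1:ℝ)/((n:ℝ)+1)))⁻¹ (γ (t + -(1/((n:ℝ)+1))) - γ t),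
      Lp.coeFn_sub (γ (t + -(1/((n:ℝ)+1)))) (γ t), Lp.coeFn_neg ((-((1:ℝ)/((n:ℝ)+1)))⁻¹ • (γ (t + -(1/((n:ℝ)+1))) - γ t))] with x a b c d h0
    simp only [Function.comp_def]
    rw [d, Pi.neg_apply, b, Pi.smul_apply, c, Pi.sub_apply, h0, sub_zero, smul_eq_mul, inv_neg, neg_mul, neg_neg]
    positivity)
  filter_upwards [p1, p2, Lp.coeFn_neg γ'] with x a b c h0
  have b := b h0
  rw [c, Pi.neg_apply] at b
  linarith [a h0]

/-- continuous a.e.-nonneg function on Ioo is nonneg -/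
lemma nonneg_of_ae {Z : ℝ → ℝ} (hZ : ContinuousOn Z (Icc 0 1)) (h : ∀ᵐ x ∂μ01, 0 ≤ Z x) :
    ∀ x ∈ Ioo (0:ℝ) 1, 0 ≤ Z x := by
  intro x hx
  by_contra hn
  push Not at hn
  have hc : ContinuousAt Z x := hZ.continuousAt (Icc_mem_nhds hx.1 hx.2)
  have := (hc.eventually (gt_mem_nhds hn)).and (Ioo_mem_nhds hx.1 hx.2)
  obtain ⟨U, hU, hUo, hxU⟩ := eventually_nhds_iff.1 this
  have h2 := ae_μ01.1 h
  have : volume U = 0 := by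
    apply measure_mono_null _ h2
    intro y hy
    simp only [mem_compl_iff, mem_ofPred_eq, Classical.not_imp, not_le]
    exact ⟨(hU y hy).2, (hU y hy).1⟩
  exact (hUo.measure_pos _ ⟨x, hxU⟩).ne' this

lemma InDomainA.zero {v w : Hsp} (h : InDomainA v w) (hv : ∀ᵐ x ∂μ01, 0 ≤ v x) :
    ∀ᵐ x ∂μ01, v x = 0 → w x = 0 := by
  obtain ⟨Z, G, hd, h0, h1, hZ⟩ := h.data
  have := hd.zero (nonneg_of_ae hd.cont (by filter_upwards [hZ, hv] with x a b; rw [a]; exact b))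
  filter_upwards [this, hZ] with x a b c
  exact a (b.trans c)



structure NiceF (F : ℝ → ℝ) (K : ℝ) : Prop where
  cont : Continuous F
  bd : ∀ y, |F y| ≤ K

lemma NiceF.mem {F : ℝ → ℝ} {K : ℝ} (h : NiceF F K) (c : ℝ) : MemLp (fun x => F (x - c)) 2 μ01 :=
  MemLp.of_bound (h.cont.comp (continuous_id.sub continuous_const)).aestronglyMeasurable K
    (by filter_upwards with x using h.bd _)

def NiceF.H {F : ℝ → ℝ} {K : ℝ} (h : NiceF F K) (c : ℝ) : Hsp := (h.mem c).toLp _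

lemma NiceF.ae {F : ℝ → ℝ} {K : ℝ} (h : NiceF F K) (c : ℝ) : ∀ᵐ x ∂μ01, h.H c x = F (x - c) :=
  (h.mem c).coeFn_toLp

lemma norm_le_of_ae {f : Hsp} {C : ℝ} (hC : 0 ≤ C) (h : ∀ᵐ x ∂μ01, |f x| ≤ C) : ‖f‖ ≤ C := by
  have := Lp.norm_le_of_ae_bound (f := f) hC h
  simpa [measureUnivNNReal] using this

lemma NiceF.lip {F F1 : ℝ → ℝ} {K K1 : ℝ} (h : NiceF F K) (h1 : NiceF F1 K1)
    (hd : ∀ y, HasDerivAt F (F1 y) y) (x y : ℝ) : |F x - F y| ≤ K1 * |x - y| := by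
  have := Convex.norm_image_sub_le_of_norm_hasDerivWithin_le (f := F) (f' := F1) (s := univ) (C := K1) (x := y) (y := x)
    (fun x _ => (hd x).hasDerivWithinAt) (fun x _ => h1.bd x) convex_univ (mem_univ _) (mem_univ _)
  simpa using this

lemma NiceF.contH {F F1 : ℝ → ℝ} {K K1 : ℝ} (h : NiceF F K) (h1 : NiceF F1 K1)
    (hd : ∀ y, HasDerivAt F (F1 y) y) : Continuous h.H := by
  have hK : 0 ≤ K1 := (abs_nonneg _).trans (h1.bd 0)
  have : LipschitzWith ⟨K1, hK⟩ h.H := by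
    apply LipschitzWith.of_dist_le_mul
    intro x y
    rw [dist_eq_norm, Real.dist_eq]
    apply norm_le_of_ae (by positivity)
    filter_upwards [h.ae x, h.ae y, Lp.coeFn_sub (h.H x) (h.H y)] with t a b c
    rw [c, Pi.sub_apply, a, b]
    have := h.lip h1 hd (t - x) (t - y)
    rw [show t - x - (t - y) = -(x - y) by ring, abs_neg] at this
    exact this
  exact this.continuous

lemma NiceF.derH {F F1 F2 : ℝ → ℝ} {K K1 K2 : ℝ} (h : NiceF F K) (h1 : NiceF F1 K1) (h2 : NiceF F2 K2)
    (hd : ∀ y, HasDerivAt F (F1 y) y) (hd1 : ∀ y, HasDerivAt F1 (F2 y) y) (c : ℝ) :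
    HasDerivAt h.H (-h1.H c) c := by
  have hK : 0 ≤ K2 := (abs_nonneg _).trans (h2.bd 0)
  rw [hasDerivAt_iff_isLittleO_nhds_zero]
  refine Asymptotics.IsBigO.trans_isLittleO ?_ (Asymptotics.isLittleO_norm_pow_id (n := 2) (by norm_num))
  apply Asymptotics.IsBigO.of_bound K2
  filter_upwards with s
  rw [norm_pow, norm_norm, Real.norm_eq_abs]
  apply norm_le_of_ae (by positivity)
  filter_upwards [h.ae (c+s), h.ae c, h1.ae c, Lp.coeFn_sub (h.H (c+s)) (h.H c),
    Lp.coeFn_sub (h.H (c+s) - h.H c) (s • (-h1.H c)), Lp.coeFn_smul s (-h1.H c), Lp.coeFn_neg (h1.H c)] with t e1 e2 e3 e4 e5 e6 e7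
  rw [e5, Pi.sub_apply, e4, Pi.sub_apply, e6, Pi.smul_apply, e7, Pi.neg_apply, e1, e2, e3, smul_eq_mul]
  -- apply MVT to s ↦ F (y - s) + s F1 y
  set y := t - c with hy
  have := Convex.norm_image_sub_le_of_norm_hasDerivWithin_le (f := fun s => F (y - s) + s * F1 y)
    (f' := fun s => - F1 (y - s) + F1 y) (s := uIcc 0 s) (C := K2 * |s|) (x := 0) (y := s)
    (fun x _ => by
      apply HasDerivAt.hasDerivWithinAt
      have a := (hd (y - x)).comp x ((hasDerivAt_id x).const_sub y)
      have b := (hasDerivAt_id x).mul_const (F1 y)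
      exact (a.add b).congr_deriv (by simp))
    (fun x hx => by
      have := h1.lip h2 hd1 y (y - x)
      rw [Real.norm_eq_abs, neg_add_eq_sub]
      refine this.trans ?_
      have := abs_sub_left_of_mem_uIcc hx
      rw [sub_sub_cancel]
      simp only [sub_zero] at this
      exact mul_le_mul_of_nonneg_left this hK) (convex_uIcc _ _) left_mem_uIcc right_mem_uIcc
  simp only [Real.norm_eq_abs, sub_zero, zero_mul, add_zero] at this
  rw [show t - (c + s) = y - s by rw [hy]; ring]
  calc _ = |F (y - s) + s * F1 y - F y| := by congr 1; ring
    _ ≤ _ := this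
    _ = _ := by ring

def bm (ρ y : ℝ) : ℝ := max (ρ^2 - y^2) 0
def bQ (ρ y : ℝ) : ℝ := bm ρ y ^ 3
def bQ1 (ρ y : ℝ) : ℝ := -6 * y * bm ρ y ^ 2
def bQ2 (ρ y : ℝ) : ℝ := -6 * bm ρ y ^ 2 + 24 * y^2 * bm ρ y

lemma bm_cont (ρ : ℝ) : Continuous (bm ρ) := by unfold bm; fun_prop

lemma bm_nonneg (ρ y : ℝ) : 0 ≤ bm ρ y := le_max_right _ _

lemma bm_le {ρ : ℝ} (h : 0 < ρ) (h1 : ρ ≤ 1) (y : ℝ) : bm ρ y ≤ 1 := by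
  apply max_le _ zero_le_one; nlinarith [sq_nonneg y]

lemma bm_cases {ρ : ℝ} (h : 0 < ρ) (h1 : ρ ≤ 1) (y : ℝ) : bm ρ y = 0 ∨ (y^2 = ρ^2 - bm ρ y ∧ |y| ≤ 1) := by
  unfold bm
  rcases max_cases (ρ^2 - y^2) 0 with ⟨e, e'⟩ | ⟨e, _⟩
  · right
    rw [e]
    refine ⟨by ring, ?_⟩
    rw [← sq_le_one_iff_abs_le_one]; nlinarith
  · left; exact e

lemma posq_der (s : ℝ) : HasDerivAt (fun s : ℝ => max s 0 ^ 2) (2 * max s 0) s := by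
  rw [hasDerivAt_iff_isLittleO_nhds_zero]
  refine Asymptotics.IsBigO.trans_isLittleO ?_ (Asymptotics.isLittleO_norm_pow_id (n := 2) (by norm_num))
  apply Asymptotics.IsBigO.of_bound 1
  filter_upwards with h
  rw [norm_pow, norm_norm, Real.norm_eq_abs, Real.norm_eq_abs, one_mul, sq_abs, smul_eq_mul, abs_le]
  rcases max_cases s 0 with ⟨e, e'⟩ | ⟨e, e'⟩ <;> rcases max_cases (s+h) 0 with ⟨f, f'⟩ | ⟨f, f'⟩ <;> rw [e, f] <;>
    constructor <;> nlinarith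

lemma bm2_der (ρ y : ℝ) : HasDerivAt (fun y => bm ρ y ^ 2) (-4 * y * bm ρ y) y := by
  have a : HasDerivAt (fun y : ℝ => ρ^2 - y^2) (-(2*y)) y := by
    simpa using (hasDerivAt_pow 2 y).const_sub (ρ^2)
  have := (posq_der (ρ^2 - y^2)).comp y a
  exact this.congr_deriv (by unfold bm; ring)

lemma bm3_eq (ρ y : ℝ) : bm ρ y ^ 3 = bm ρ y ^ 2 * (ρ^2 - y^2) := by
  unfold bm
  rcases max_cases (ρ^2 - y^2) 0 with ⟨e, e'⟩ | ⟨e, _⟩ <;> rw [e] <;> ring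

lemma bm2_eq (ρ y : ℝ) : bm ρ y ^ 2 = bm ρ y * (ρ^2 - y^2) := by
  unfold bm
  rcases max_cases (ρ^2 - y^2) 0 with ⟨e, e'⟩ | ⟨e, _⟩ <;> rw [e] <;> ring

lemma bQ_der (ρ y : ℝ) : HasDerivAt (bQ ρ) (bQ1 ρ y) y := by
  have a : HasDerivAt (fun y : ℝ => ρ^2 - y^2) (-(2*y)) y := by
    simpa using (hasDerivAt_pow 2 y).const_sub (ρ^2)
  have := (bm2_der ρ y).mul a
  have e : bQ ρ = (fun y => bm ρ y ^ 2) * fun y => ρ^2 - y^2 := by ext y; exact bm3_eq ρ y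
  rw [e]
  exact this.congr_deriv (by unfold bQ1; linear_combination (4 * y) * bm2_eq ρ y)

lemma bQ1_der (ρ y : ℝ) : HasDerivAt (bQ1 ρ) (bQ2 ρ y) y := by
  have := (((hasDerivAt_id y).const_mul (-6)).mul (bm2_der ρ y))
  exact this.congr_deriv (by simp [bQ2]; ring)

lemma bQ_nice {ρ : ℝ} (h : 0 < ρ) (h1 : ρ ≤ 1) : NiceF (bQ ρ) 1 where
  cont := (bm_cont ρ).pow 3
  bd y := by
    have := bm_nonneg ρ y
    rw [bQ, abs_of_nonneg (by positivity)]
    exact pow_le_one₀ this (bm_le h h1 y)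

lemma bQ1_nice {ρ : ℝ} (h : 0 < ρ) (h1 : ρ ≤ 1) : NiceF (bQ1 ρ) 6 where
  cont := by have := bm_cont ρ; unfold bQ1; fun_prop
  bd y := by
    have h0 := bm_nonneg ρ y
    have h2 := pow_le_one₀ (n := 2) h0 (bm_le h h1 y)
    rcases bm_cases h h1 y with e | e
    · simp [bQ1, e]
    · rw [bQ1, abs_mul, abs_mul, abs_of_nonneg (by positivity : 0 ≤ bm ρ y ^ 2)]
      norm_num
      have : |y| * bm ρ y ^ 2 ≤ 1 * 1 := by gcongr; exact e.2
      linarith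

lemma bQ2_nice {ρ : ℝ} (h : 0 < ρ) (h1 : ρ ≤ 1) : NiceF (bQ2 ρ) 30 where
  cont := by have := bm_cont ρ; unfold bQ2; fun_prop
  bd y := by
    have h0 := bm_nonneg ρ y
    have h3 := bm_le h h1 y
    have h2 := pow_le_one₀ (n := 2) h0 (bm_le h h1 y)
    rcases bm_cases h h1 y with e | e
    · simp [bQ2, e]
    · have hy : y^2 ≤ 1 := by rw [sq_le_one_iff_abs_le_one]; exact e.2
      have : y^2 * bm ρ y ≤ 1 * 1 := by gcongr
      have : 0 ≤ y^2 * bm ρ y := by positivity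
      have : 0 ≤ bm ρ y ^ 2 := by positivity
      rw [bQ2, abs_le]; constructor <;> linarith

lemma bQ_sub {ρ κ lam : ℝ} (h : 0 < ρ) (h1 : ρ ≤ 1) (hl : (6 * |κ| + 30)^2 = 96 * ρ^2 * lam) (y : ℝ) :
    -lam * bQ ρ y - κ * bQ1 ρ y - bQ2 ρ y ≤ 0 := by
  have h0 := bm_nonneg ρ y
  unfold bQ bQ1 bQ2
  rcases bm_cases h h1 y with e | e
  · simp [e]
  · set m := bm ρ y
    suffices 0 ≤ m * (lam * m^2 - 6 * (κ * y) * m - 30 * m + 24 * ρ^2) by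
      have e2 : y^2 = ρ^2 - m := e.1
      nlinarith
    apply mul_nonneg h0
    have hk : κ * y ≤ |κ| := by
      refine (le_abs_self _).trans ?_
      rw [abs_mul]
      exact mul_le_of_le_one_right (abs_nonneg _) e.2
    have : κ * y * m ≤ |κ| * m := by gcongr
    set A := 6 * |κ| + 30 with hA
    have hr : 0 < ρ^2 := by positivity
    have : 0 ≤ lam * m^2 - A * m + 24 * ρ^2 := by
      have : 0 ≤ 96 * ρ^2 * (lam * m^2 - A * m + 24 * ρ^2) := by
        nlinarith [sq_nonneg (A * m - 48 * ρ^2)]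
      nlinarith [(mul_nonneg_iff_of_pos_left (show 0 < 96 * ρ^2 by positivity)).1 this]
    rw [hA] at this
    nlinarith

lemma bQ_zero {ρ y : ℝ} (hρ : 0 < ρ) (h : ρ ≤ |y|) : bQ ρ y = 0 := by
  have : bm ρ y = 0 := by
    unfold bm; apply max_eq_right
    have : ρ^2 ≤ |y|^2 := by gcongr
    rw [sq_abs] at this; linarith
  simp [bQ, this]

lemma bQ_data {ρ : ℝ} (h : 0 < ρ) (h1 : ρ ≤ 1) (k c : ℝ) :
    DomData (fun x => k * bQ ρ (x - c)) (fun x => k * bQ1 ρ (x - c)) (fun x => k * bQ2 ρ (x - c)) where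
  cont := by
    have := (bQ_nice h h1).cont
    fun_prop
  der x _ := by
    have := ((bQ_der ρ (x - c)).comp_sub_const x c).const_mul k
    simpa using this
  ac := by
    have : LipschitzOnWith (⟨|k| * 30, by positivity⟩) (fun x => k * bQ1 ρ (x - c)) (uIcc 0 1) := by
      apply LipschitzOnWith.of_dist_le_mul
      intro x _ y _
      rw [Real.dist_eq, Real.dist_eq, ← mul_sub, abs_mul]
      have := (bQ1_nice h h1).lip (bQ2_nice h h1) (bQ1_der ρ) (x - c) (y - c)
      simp only [sub_sub_sub_cancel_right] at this
      show _ ≤ |k| * 30 * |x - y|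
      rw [mul_assoc]
      gcongr
    exact this.absolutelyContinuousOnInterval
  derG := by
    filter_upwards with x
    have := ((bQ1_der ρ (x - c)).comp_sub_const x c).const_mul k
    simpa using this


structure GoodAt (B W : ℝ) (v v' vxx r : Hsp) : Prop where
  dom : InDomainA v vxx
  eq : v' = r + vxx
  r0 : ∀ᵐ x ∂μ01, v x = 0 → r x = 0
  r1 : ∀ᵐ x ∂μ01, 0 < v x → r x = B + W * v x
  nn : ∀ᵐ x ∂μ01, 0 ≤ v x

lemma extract {σ : C(ℝ, ℝ × ℝ)} {γ : ℝ → Hsp} (h : IsNonnegCompleteTraj σ γ) {a b : ℝ} (hab : a < b) :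
    ∃ u' uxx r : ℝ → Hsp, IsPath γ u' a b ∧
      ∀ᵐ t, t ∈ Ioo a b → GoodAt (σ t).1 (σ t).2 (γ t) (u' t) (uxx t) (r t) := by
  obtain ⟨r, u', uxx, S⟩ := h.1 (a - 1)
  have hf := S.fund a b (by linarith) hab
  have hp : IsPath γ u' a b := ⟨hab, hf.1, hf.2⟩
  refine ⟨u', uxx, r, hp, ?_⟩
  have s1 := (ae_restrict_iff' measurableSet_Ioi).1 S.sel
  have s2 := (ae_restrict_iff' measurableSet_Ioi).1 S.dom
  have s3 := (ae_restrict_iff' measurableSet_Ioi).1 S.eq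
  filter_upwards [s1, s2, s3, hp.deriv] with t e1 e2 e3 e4 ht
  have hm : t ∈ Ioi (a-1) := by have := ht.1; simp only [mem_Ioi]; linarith
  refine ⟨e2 hm, e3 hm, ?_, ?_, h.2 t⟩
  · filter_upwards [derH_zero (e4 ht) h.2, (e2 hm).zero (h.2 t), Lp.coeFn_add (r t) (uxx t)] with x p q c h0
    have p := p h0
    rw [e3 hm, c, Pi.add_apply, q h0] at p
    simpa using p
  · filter_upwards [e1 hm] with x ⟨k, hk, hk'⟩ h0
    rw [heaviside, if_neg (not_lt.2 h0.le), if_neg h0.ne'] at hk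
    rw [hk', hk]; ring

lemma GoodAt.rnn {B W : ℝ} {v v' vxx r : Hsp} (h : GoodAt B W v v' vxx r) (hB : 0 ≤ B) (hW : 0 ≤ W) :
    ∀ᵐ x ∂μ01, 0 ≤ r x := by
  filter_upwards [h.r0, h.r1, h.nn] with x a b c
  rcases c.eq_or_lt with e | e
  · rw [a e.symm]
  · rw [b e]; positivity

lemma bar_path {ρ : ℝ} (h : 0 < ρ) (h1 : ρ ≤ 1) (ε lam κ x0 a b : ℝ) (hab : a < b) :
    IsPath (fun t => (ε * Real.exp (-lam * (t - a))) • (bQ_nice h h1).H (x0 + κ * (t - a)))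
      (fun t => (ε * Real.exp (-lam * (t - a))) • (-lam • (bQ_nice h h1).H (x0 + κ * (t - a))
        - κ • (bQ1_nice h h1).H (x0 + κ * (t - a)))) a b := by
  have c0 := (bQ_nice h h1).contH (bQ1_nice h h1) (bQ_der ρ)
  have c1 := (bQ1_nice h h1).contH (bQ2_nice h h1) (bQ1_der ρ)
  have hc : Continuous (fun t => (ε * Real.exp (-lam * (t - a))) • (-lam • (bQ_nice h h1).H (x0 + κ * (t - a))
        - κ • (bQ1_nice h h1).H (x0 + κ * (t - a)))) := by
    fun_prop
  refine ⟨hab, hc.intervalIntegrable _ _, ?_⟩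
  intro t ht
  rw [intervalIntegral.integral_eq_sub_of_hasDerivAt (f := fun t => (ε * Real.exp (-lam * (t - a))) • (bQ_nice h h1).H (x0 + κ * (t - a)))]
  · abel
  · intro s _
    have d1 : HasDerivAt (fun t => x0 + κ * (t - a)) κ s := by
      simpa using (((hasDerivAt_id s).sub_const a).const_mul κ).const_add x0
    have d2 := ((bQ_nice h h1).derH (bQ1_nice h h1) (bQ2_nice h h1) (bQ_der ρ) (bQ1_der ρ) (x0 + κ * (s - a))).scomp s d1
    have d3 : HasDerivAt (fun t => ε * Real.exp (-lam * (t - a))) (ε * (Real.exp (-lam * (s - a)) * (-lam))) s := by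
      have : HasDerivAt (fun t => -lam * (t - a)) (-lam) s := by
        simpa using (((hasDerivAt_id s).sub_const a).const_mul (-lam))
      exact this.exp.const_mul ε
    have := d3.smul d2
    refine this.congr_deriv ?_
    simp only [Function.comp_def]
    module
  · exact hc.intervalIntegrable _ _

lemma barrier {σ : C(ℝ, ℝ × ℝ)} {γ : ℝ → Hsp} (h : IsNonnegCompleteTraj σ γ)
    (hB : ∀ t, 0 ≤ (σ t).1) (hW : ∀ t, 0 ≤ (σ t).2) {a b ρ ε x0 x1 : ℝ} (hab : a < b) (hρ : 0 < ρ) (hρ1 : ρ ≤ 1)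
    (hε : 0 < ε) (hx0 : x0 ∈ Icc ρ (1 - ρ)) (hx1 : x1 ∈ Icc ρ (1 - ρ))
    (hi : ∀ᵐ x ∂μ01, ε * bQ ρ (x - x0) ≤ γ a x) :
    ∃ ε' > 0, ∀ᵐ x ∂μ01, ε' * bQ ρ (x - x1) ≤ γ b x := by
  set κ := (x1 - x0) / (b - a) with hκ
  set lam := (6 * |κ| + 30)^2 / (96 * ρ^2) with hl
  have hl' : (6 * |κ| + 30)^2 = 96 * ρ^2 * lam := by rw [hl]; field_simp
  refine ⟨ε * Real.exp (-lam * (b - a)), by positivity, ?_⟩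
  obtain ⟨u', uxx, r, hp, hg⟩ := extract h hab
  have hv := bar_path hρ hρ1 ε lam κ x0 a b hab
  have hcb : x0 + κ * (b - a) = x1 := by
    have : b - a ≠ 0 := by linarith
    rw [hκ]; field_simp; ring
  have main := cmpH hp hv ?_ ?_
  · filter_upwards [main, Lp.coeFn_smul (ε * Real.exp (-lam * (b - a))) ((bQ_nice hρ hρ1).H (x0 + κ * (b - a))),
      (bQ_nice hρ hρ1).ae (x0 + κ * (b - a))] with x p q s
    rw [q, Pi.smul_apply, s, hcb, smul_eq_mul] at p
    exact p
  · filter_upwards [hg] with t hg ht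
    have hg := hg ht
    set k := ε * Real.exp (-lam * (t - a)) with hk
    have hk0 : 0 < k := by positivity
    set c := x0 + κ * (t - a) with hc
    have hcm : c ∈ Icc ρ (1 - ρ) := by
      have : c = (1 - (t-a)/(b-a)) * x0 + ((t-a)/(b-a)) * x1 := by
        rw [hc, hκ]; ring
      have hs0 : 0 ≤ (t-a)/(b-a) := div_nonneg (by linarith [ht.1]) (by linarith)
      have hs1 : (t-a)/(b-a) ≤ 1 := by rw [div_le_one (by linarith)]; linarith [ht.2]
      rw [this]
      exact convex_Icc ρ (1-ρ) hx0 hx1 (by linarith) hs0 (by ring)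
    refine ⟨k • (bQ2_nice hρ hρ1).H c - uxx t,
      k • (-lam • (bQ_nice hρ hρ1).H c - κ • (bQ1_nice hρ hρ1).H c - (bQ2_nice hρ hρ1).H c) - r t, ?_, ?_, ?_⟩
    · obtain ⟨Z, G, hd, z0, z1, hZ⟩ := hg.dom.data
      have D := (bQ_data hρ hρ1 k c).sub hd
      have := D.pos (by
        have : bQ ρ (0 - c) = 0 := bQ_zero hρ (by rw [zero_sub, abs_neg]; exact hcm.1.trans (le_abs_self _))
        beta_reduce; rw [z0, this]; simp) (by
        have : bQ ρ (1 - c) = 0 := bQ_zero hρ (le_trans (by linarith [hcm.2]) (le_abs_self _))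
        beta_reduce; rw [z1, this]; simp)
      rw [inner_congr (F := fun x => max (k * bQ ρ (x - c) - Z x) 0) (G := fun x => k * bQ2 ρ (x - c) - uxx t x)]
      · exact this
      · filter_upwards [Lp.coeFn_posPart (k • (bQ_nice hρ hρ1).H c - γ t), Lp.coeFn_sub (k • (bQ_nice hρ hρ1).H c) (γ t),
          Lp.coeFn_smul k ((bQ_nice hρ hρ1).H c), (bQ_nice hρ hρ1).ae c, hZ] with x e1 e2 e3 e4 e5
        rw [e1, e2, Pi.sub_apply, e3, Pi.smul_apply, e4, e5, smul_eq_mul]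
      · filter_upwards [Lp.coeFn_sub (k • (bQ2_nice hρ hρ1).H c) (uxx t),
          Lp.coeFn_smul k ((bQ2_nice hρ hρ1).H c), (bQ2_nice hρ hρ1).ae c] with x e2 e3 e4
        rw [e2, Pi.sub_apply, e3, Pi.smul_apply, e4, smul_eq_mul]
    · rw [hg.eq]; module
    · set q0 := (bQ_nice hρ hρ1).H c
      set q1 := (bQ1_nice hρ hρ1).H c
      set q2 := (bQ2_nice hρ hρ1).H c
      filter_upwards [hg.rnn (hB t) (hW t), (bQ_nice hρ hρ1).ae c, (bQ1_nice hρ hρ1).ae c, (bQ2_nice hρ hρ1).ae c,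
        Lp.coeFn_sub (k • (-lam • q0 - κ • q1 - q2)) (r t), Lp.coeFn_smul k (-lam • q0 - κ • q1 - q2),
        Lp.coeFn_sub (-lam • q0 - κ • q1) q2, Lp.coeFn_sub (-lam • q0) (κ • q1), Lp.coeFn_smul (-lam) q0,
        Lp.coeFn_smul κ q1] with x e0 e1 e2 e3 e4 e5 e6 e7 e8 e9
      rw [e4, Pi.sub_apply, e5, Pi.smul_apply, e6, Pi.sub_apply, e7, Pi.sub_apply, e8, e9, Pi.smul_apply, Pi.smul_apply,
        e1, e2, e3]
      simp only [smul_eq_mul]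
      have := mul_nonpos_of_nonneg_of_nonpos hk0.le (bQ_sub hρ hρ1 hl' (x - c))
      linarith
  · filter_upwards [hi, Lp.coeFn_smul (ε * Real.exp (-lam * (a - a))) ((bQ_nice hρ hρ1).H (x0 + κ * (a - a))),
      (bQ_nice hρ hρ1).ae (x0 + κ * (a - a))] with x p q s
    rw [q, Pi.smul_apply, s, smul_eq_mul]
    simpa using p


lemma trajCont {σ : C(ℝ, ℝ × ℝ)} {γ : ℝ → Hsp} (h : IsNonnegCompleteTraj σ γ) : Continuous γ := by
  rw [continuous_iff_continuousAt]
  intro t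
  obtain ⟨r, u', uxx, S⟩ := h.1 (t - 1)
  exact S.cont.continuousAt (Ici_mem_nhds (by linarith))

lemma posAt {σ : C(ℝ, ℝ × ℝ)} {γ : ℝ → Hsp} (h : IsNonnegCompleteTraj σ γ)
    (hB : ∀ t, 0 ≤ (σ t).1) (hW : ∀ t, 0 ≤ (σ t).2) {t1 t : ℝ} (ht : t1 < t) (h0 : γ t1 ≠ 0)
    {w1 w : Hsp} (hd1 : InDomainA (γ t1) w1) (hd : InDomainA (γ t) w) : ∀ᵐ x ∂μ01, 0 < γ t x := by
  obtain ⟨Z1, _, D1, _, _, hZ1⟩ := hd1.data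
  obtain ⟨Z, _, D, _, _, hZ⟩ := hd.data
  have n1 := nonneg_of_ae D1.cont (by filter_upwards [hZ1, h.2 t1] with x a b; rw [a]; exact b)
  obtain ⟨x0, hx0, hpos⟩ : ∃ x0 ∈ Ioo (0:ℝ) 1, 0 < Z1 x0 := by
    by_contra hn
    push Not at hn
    apply h0
    apply Lp.ext
    filter_upwards [hZ1, ae_Ioo, Lp.coeFn_zero ℝ 2 μ01] with x a b c
    rw [c, ← a]
    exact le_antisymm (hn x b) (n1 x b)
  have hc : ContinuousAt Z1 x0 := D1.cont.continuousAt (Icc_mem_nhds hx0.1 hx0.2)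
  obtain ⟨ρ0, hρ0, hb⟩ := Metric.eventually_nhds_iff.1 (hc.eventually (lt_mem_nhds (half_lt_self hpos)))
  suffices ∀ x ∈ Ioo (0:ℝ) 1, 0 < Z x by
    filter_upwards [hZ, ae_Ioo] with x a b
    rw [← a]; exact this x b
  intro x1 hx1
  obtain ⟨ρ, hρ, hρ1, ha, hb', hc', hd', he'⟩ : ∃ ρ : ℝ, 0 < ρ ∧ ρ ≤ ρ0 ∧ ρ ≤ x0 ∧ ρ ≤ 1 - x0 ∧ ρ ≤ x1 ∧ ρ ≤ 1 - x1 ∧ ρ ≤ 1 := by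
    refine ⟨min ρ0 (min (min x0 (1-x0)) (min x1 (1-x1))), ?_, ?_, ?_, ?_, ?_, ?_, ?_⟩
    · simp only [lt_min_iff]; exact ⟨hρ0, ⟨hx0.1, by linarith [hx0.2]⟩, ⟨hx1.1, by linarith [hx1.2]⟩⟩
    · simp
    · simp
    · simp
    · simp
    · simp
    · have : x0 ≤ 1 := hx0.2.le
      simp [this]
  obtain ⟨ε', hε', hf⟩ := barrier h hB hW ht hρ he' (half_pos hpos) (x0 := x0) (x1 := x1)
    ⟨ha, by linarith⟩ ⟨hc', by linarith⟩ (by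
      filter_upwards [hZ1, h.2 t1] with x e1 e2
      by_cases hx : ρ ≤ |x - x0|
      · rw [bQ_zero hρ hx]; simpa using e2
      · have l1 := hb (y := x) (by rw [Real.dist_eq]; linarith)
        have l2 := (le_abs_self _).trans ((bQ_nice hρ he').bd (x - x0))
        rw [← e1]
        nlinarith)
  have := nonneg_of_ae (Z := fun x => Z x - ε' * bQ ρ (x - x1)) (D.cont.sub (by
    have := (bQ_nice hρ he').cont
    fun_prop)) (by filter_upwards [hf, hZ] with x e1 e2; rw [e2]; linarith) x1 hx1
  have q : 0 < bQ ρ (x1 - x1) := by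
    simp only [sub_self, bQ, bm]
    apply pow_pos
    simp; positivity
  have := mul_pos hε' q
  linarith

lemma posi {σ : C(ℝ, ℝ × ℝ)} {γ : ℝ → Hsp} (h : IsNonnegCompleteTraj σ γ)
    (hB : ∀ t, 0 ≤ (σ t).1) (hW : ∀ t, 0 ≤ (σ t).2) {t0 b : ℝ} (hb : t0 < b) (h0 : γ t0 ≠ 0) :
    ∀ᵐ t, t ∈ Ioo t0 b → ∀ᵐ x ∂μ01, 0 < γ t x := by
  obtain ⟨u', uxx, r, hp, hg⟩ := extract h hb
  filter_upwards [hg] with t ht htm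
  have hev : ∀ᶠ s in nhds t0, γ s ≠ 0 := (trajCont h).continuousAt.eventually_ne h0
  obtain ⟨e, he, hev⟩ := Metric.eventually_nhds_iff.1 hev
  have hlt : t0 < min t (t0 + e) := lt_min htm.1 (by linarith)
  have : ∃ t1 ∈ Ioo t0 (min t (t0 + e)), t1 ∈ Ioo t0 b → GoodAt (σ t1).1 (σ t1).2 (γ t1) (u' t1) (uxx t1) (r t1) := by
    by_contra hn
    push Not at hn
    have : volume (Ioo t0 (min t (t0 + e))) = 0 := by
      apply measure_mono_null _ hg
      intro y hy
      simp only [mem_compl_iff, mem_ofPred_eq, Classical.not_imp]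
      exact hn y hy
    rw [Real.volume_Ioo, ENNReal.ofReal_eq_zero] at this
    linarith
  obtain ⟨t1, hm, hg1⟩ := this
  have l1 : t1 < t := hm.2.trans_le (min_le_left _ _)
  have l2 : t1 < t0 + e := hm.2.trans_le (min_le_right _ _)
  have hg1 := hg1 ⟨hm.1, l1.trans htm.2⟩
  refine posAt h hB hW l1 (hev ?_) hg1.dom (ht htm).dom
  rw [Real.dist_eq, abs_of_pos (by linarith [hm.1])]; linarith

/-- difference estimate between two (a.e. positive) solutions -/
lemma GoodAt.full {B W : ℝ} {v v' vxx r : Hsp} (h : GoodAt B W v v' vxx r) (hp : ∀ᵐ x ∂μ01, 0 < v x) :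
    v' = vxx + W • v + B • oneH := by
  have : r = W • v + B • oneH := by
    apply Lp.ext
    filter_upwards [hp, h.r1, Lp.coeFn_add (W • v) (B • oneH), Lp.coeFn_smul W v, Lp.coeFn_smul B oneH, oneH_ae] with x a b c d e f
    rw [b a, c, Pi.add_apply, d, e, Pi.smul_apply, Pi.smul_apply, ← f, smul_eq_mul, smul_eq_mul]; ring
  rw [h.eq, this]; abel

lemma diff_est {σ τ : C(ℝ, ℝ × ℝ)} {γ ζ : ℝ → Hsp} (h : IsNonnegCompleteTraj σ γ) (k : IsNonnegCompleteTraj τ ζ)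
    {a b ω1 η η' M : ℝ} (hab : a < b) (hω : ω1 < Real.pi^2) (hW : ∀ t ∈ Ioo a b, (σ t).2 ≤ ω1)
    (hγ : ∀ᵐ t, t ∈ Ioo a b → ∀ᵐ x ∂μ01, 0 < γ t x) (hζ : ∀ᵐ t, t ∈ Ioo a b → ∀ᵐ x ∂μ01, 0 < ζ t x)
    (hB : ∀ t ∈ Ioo a b, |(σ t).1 - (τ t).1| ≤ η) (hB' : ∀ t ∈ Ioo a b, |(σ t).2 - (τ t).2| ≤ η')
    (hM : ∀ t, ‖ζ t‖ ≤ M) :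
    ‖γ b - ζ b‖^2 ≤ Real.exp (-(Real.pi^2 - ω1) * (b-a)) * ‖γ a - ζ a‖^2 + (η + η' * M)^2/(Real.pi^2 - ω1)^2 := by
  obtain ⟨u', uxx, r, hp, hg⟩ := extract h hab
  obtain ⟨v', vxx, s, hq, hk⟩ := extract k hab
  have alg : ∀ A C g z o : Hsp, ∀ w1 w2 b1 b2 : ℝ, (A + w1 • g + b1 • o) - (C + w2 • z + b2 • o) =
      (A - C) + w1 • (g - z) + ((b1 - b2) • o + (w1 - w2) • z) := by intros; module
  have H : ∀ᵐ t, t ∈ Ioo a b → ∃ wxx : Hsp, inner ℝ (γ t - ζ t) wxx ≤ -Real.pi^2 * ‖γ t - ζ t‖^2 ∧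
      u' t - v' t = wxx + (σ t).2 • (γ t - ζ t) + (((σ t).1 - (τ t).1) • oneH + ((σ t).2 - (τ t).2) • ζ t) ∧ (σ t).2 ≤ ω1 ∧
      ‖((σ t).1 - (τ t).1) • oneH + ((σ t).2 - (τ t).2) • ζ t‖ ≤ η + η' * M := by
    filter_upwards [hg, hk, hγ, hζ] with t e1 e2 e3 e4 ht
    refine ⟨uxx t - vxx t, (e1 ht).dom.sub_energy (e2 ht).dom, ?_, hW t ht, ?_⟩
    · rw [(e1 ht).full (e3 ht), (e2 ht).full (e4 ht), alg]
    · refine (norm_add_le _ _).trans ?_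
      rw [norm_smul, norm_smul, norm_oneH, mul_one, Real.norm_eq_abs, Real.norm_eq_abs]
      have h2 := hB' t ht
      have h4 : 0 ≤ η' := (abs_nonneg _).trans h2
      exact add_le_add (hB t ht) (mul_le_mul h2 (hM t) (norm_nonneg _) h4)
  have hpq := hp.sub hq
  generalize hδ : Real.pi^2 - ω1 = δ
  exact gronwall (w := fun t => γ t - ζ t) (w' := fun t => u' t - v' t)
    (F := fun t => ((σ t).1 - (τ t).1) • oneH + ((σ t).2 - (τ t).2) • ζ t) (om := fun t => (σ t).2)
    (ω1 := ω1) (η := η + η' * M) (δ := δ) hpq (by linarith) hδ.symm H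



lemma translateCM_apply (h : ℝ) (σ : C(ℝ, ℝ × ℝ)) (t : ℝ) : translateCM h σ t = σ (t + h) := rfl

lemma translateCM_add (h k : ℝ) (σ : C(ℝ, ℝ × ℝ)) : translateCM h (translateCM k σ) = translateCM (h + k) σ := by
  ext1 t
  simp [translateCM_apply, add_assoc]

lemma hull_closed (σ0 : C(ℝ, ℝ × ℝ)) : IsClosed (hullSet σ0) := isClosed_closure

lemma hull_translate {σ0 σ : C(ℝ, ℝ × ℝ)} (h : σ ∈ hullSet σ0) (t : ℝ) : translateCM t σ ∈ hullSet σ0 := by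
  have hc : Continuous (translateCM t) := ContinuousMap.continuous_precomp _
  have : MapsTo (translateCM t) {σ | ∃ h : ℝ, σ = translateCM h σ0} {σ | ∃ h : ℝ, σ = translateCM h σ0} := by
    rintro _ ⟨s, rfl⟩
    exact ⟨t + s, translateCM_add _ _ _⟩
  exact this.closure hc h

lemma hull_bounds {b ω : ℝ → ℝ} {b0 b1 ω0 ω1 : ℝ} (hC : Cond1 b ω b0 b1 ω0 ω1)
    {σ0 σ : C(ℝ, ℝ × ℝ)} (hσ0 : ∀ t, σ0 t = (b t, ω t)) (h : σ ∈ hullSet σ0) (t : ℝ) :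
    σ t ∈ Icc b0 b1 ×ˢ Icc ω0 ω1 := by
  have hcl : IsClosed {σ : C(ℝ, ℝ × ℝ) | σ t ∈ Icc b0 b1 ×ˢ Icc ω0 ω1} :=
    (isClosed_Icc.prod isClosed_Icc).preimage (continuous_eval_const t)
  refine closure_minimal ?_ hcl h
  rintro _ ⟨s, rfl⟩
  show translateCM s σ0 t ∈ Icc b0 b1 ×ˢ Icc ω0 ω1
  rw [translateCM_apply, hσ0]
  exact ⟨⟨hC.blb _, hC.bub _⟩, ⟨hC.ωlb _, hC.ωub _⟩⟩

lemma hull_compact {b ω : ℝ → ℝ} {b0 b1 ω0 ω1 : ℝ} (hC : Cond1 b ω b0 b1 ω0 ω1)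
    (hbu : UniformContinuous b) (hωu : UniformContinuous ω)
    {σ0 : C(ℝ, ℝ × ℝ)} (hσ0 : ∀ t, σ0 t = (b t, ω t)) : IsCompact (hullSet σ0) := by
  have hu : UniformContinuous σ0 := by
    have := hbu.prodMk hωu
    convert this using 1
    ext1 t; exact hσ0 t
  rw [Metric.uniformContinuous_iff] at hu
  choose! d hd hdd using hu
  let A : Set (ℝ → ℝ × ℝ) := {f | (∀ t, f t ∈ Icc b0 b1 ×ˢ Icc ω0 ω1) ∧
    ∀ ε > 0, ∀ s t : ℝ, dist s t < d ε → dist (f s) (f t) ≤ ε}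
  have hA : IsCompact A := by
    have hK : IsCompact (Set.pi univ fun _ : ℝ => Icc b0 b1 ×ˢ Icc ω0 ω1) :=
      isCompact_univ_pi fun _ => isCompact_Icc.prod isCompact_Icc
    have hcl : IsClosed {f : ℝ → ℝ × ℝ | ∀ ε > 0, ∀ s t : ℝ, dist s t < d ε → dist (f s) (f t) ≤ ε} := by
      have : {f : ℝ → ℝ × ℝ | ∀ ε > 0, ∀ s t : ℝ, dist s t < d ε → dist (f s) (f t) ≤ ε} =
        ⋂ (ε : ℝ) (_ : ε > 0) (s : ℝ) (t : ℝ) (_ : dist s t < d ε), {f : ℝ → ℝ × ℝ | dist (f s) (f t) ≤ ε} := by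
        ext f; simp
      rw [this]
      refine isClosed_iInter fun ε => isClosed_iInter fun _ => isClosed_iInter fun s => isClosed_iInter fun t =>
        isClosed_iInter fun _ => ?_
      exact isClosed_le ((continuous_apply s).dist (continuous_apply t)) continuous_const
    refine (hK.inter_right hcl).of_isClosed_subset ?_ ?_
    · have : A = (Set.pi univ fun _ : ℝ => Icc b0 b1 ×ˢ Icc ω0 ω1) ∩ {f : ℝ → ℝ × ℝ | ∀ ε > 0, ∀ s t : ℝ, dist s t < d ε → dist (f s) (f t) ≤ ε} := by
        ext f; constructor
        · rintro ⟨h1, h2⟩; exact ⟨fun t _ => h1 t, h2⟩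
        · rintro ⟨h1, h2⟩; exact ⟨fun t => h1 t (mem_univ _), h2⟩
      rw [this]
      exact hK.isClosed.inter hcl
    · rintro f ⟨h1, h2⟩; exact ⟨fun t _ => h1 t, h2⟩
  let S : Set C(ℝ, ℝ × ℝ) := {σ | (σ : ℝ → ℝ × ℝ) ∈ A}
  have hS : IsCompact S := by
    apply ArzelaAscoli.isCompact_of_equicontinuous
    · have : ContinuousMap.toFun '' S = A := by
        ext f; constructor
        · rintro ⟨σ, hσ, rfl⟩; exact hσ
        · intro hf
          have hc : Continuous f := by
            rw [Metric.continuous_iff]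
            intro t ε hε
            refine ⟨d (ε/2), hd _ (by positivity), fun s hs => ?_⟩
            exact (hf.2 (ε/2) (by positivity) s t hs).trans_lt (by linarith)
          exact ⟨⟨f, hc⟩, hf, rfl⟩
      rw [this]; exact hA
    · intro t
      rw [Metric.equicontinuousAt_iff]
      intro ε hε
      refine ⟨d (ε/2), hd _ (by positivity), fun s hs σ => ?_⟩
      rw [dist_comm] at hs
      exact (σ.2.2 (ε/2) (by positivity) t s hs).trans_lt (by linarith)
  have hScl : IsClosed S := by
    have hcc : Continuous (fun σ : C(ℝ, ℝ × ℝ) => (σ : ℝ → ℝ × ℝ)) := continuous_pi fun t => continuous_eval_const t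
    exact hA.isClosed.preimage hcc
  refine hS.of_isClosed_subset (hull_closed _) (closure_minimal ?_ hScl)
  rintro _ ⟨h, rfl⟩
  refine ⟨fun t => ?_, fun ε hε s t hst => ?_⟩
  · rw [translateCM_apply, hσ0]
    exact ⟨⟨hC.blb _, hC.bub _⟩, ⟨hC.ωlb _, hC.ωub _⟩⟩
  · rw [translateCM_apply, translateCM_apply]
    exact (hdd ε hε (by simpa using hst)).le

lemma traj_translate {σ : C(ℝ, ℝ × ℝ)} {γ : ℝ → Hsp} (h : IsNonnegCompleteTraj σ γ) (s : ℝ) :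
    IsNonnegCompleteTraj (translateCM s σ) (fun t => γ (t + s)) := by
  refine ⟨fun τ => ?_, fun t => h.2 _⟩
  obtain ⟨r, u', uxx, S⟩ := h.1 (τ + s)
  have mp := measurePreserving_add_right (volume : Measure ℝ) s
  have mpI : MeasurePreserving (fun t => t + s) (volume.restrict (Ioi τ)) (volume.restrict (Ioi (τ + s))) := by
    have := mp.restrict_preimage (measurableSet_Ioi (a := τ + s))
    simpa using this
  have ae_tr : ∀ {p : ℝ → Prop}, (∀ᵐ t ∂(volume.restrict (Ioi (τ + s))), p t) →
      ∀ᵐ t ∂(volume.restrict (Ioi τ)), p (t + s) := fun hp => mpI.quasiMeasurePreserving.ae hp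
  refine ⟨fun t => r (t + s), fun t => u' (t + s), fun t => uxx (t + s), ?_, ?_, ?_, ?_, ?_, ?_⟩
  · exact S.cont.comp (by fun_prop) (fun t ht => by simpa using ht)
  · intro T hT
    have m2 : MeasurePreserving (fun t => t + s) (volume.restrict (Ioo τ T)) (volume.restrict (Ioo (τ + s) (T + s))) := by
      have := mp.restrict_preimage (measurableSet_Ioo (a := τ + s) (b := T + s))
      simpa using this
    exact (S.rmem (T + s) (by linarith)).comp_measurePreserving m2
  · exact ae_tr S.sel
  · exact ae_tr S.dom
  · exact ae_tr S.eq
  · intro T1 T2 h1 h2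
    obtain ⟨i1, i2⟩ := S.fund (T1 + s) (T2 + s) (by linarith) (by linarith)
    refine ⟨by simpa using i1.comp_add_right s, fun t ht => ?_⟩
    rw [intervalIntegral.integral_comp_add_right u' s]
    exact i2 (t + s) ⟨by linarith [ht.1], by linarith [ht.2]⟩

lemma dom_zero : InDomainA 0 0 := by
  refine ⟨fun _ => 0, continuousOn_const, rfl, rfl, ?_, fun _ => 0, fun x _ => hasDerivAt_const _ _, ?_⟩
  · filter_upwards [Lp.coeFn_zero ℝ 2 μ01] with x hx
    rw [hx]; rfl
  · intro x hx y hy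
    rw [sub_zero, eq_comm]
    apply intervalIntegral.integral_zero_ae
    have := ae_μ01.1 (Lp.coeFn_zero ℝ 2 μ01)
    filter_upwards [this] with z hz hzm
    exact hz (ordConnected_Ioo.uIcc_subset hy hx (uIoc_subset_uIcc hzm))

lemma traj_zero (σ : C(ℝ, ℝ × ℝ)) : IsNonnegCompleteTraj σ (fun _ => 0) := by
  refine ⟨fun τ => ⟨fun _ => 0, fun _ => 0, fun _ => 0, ?_⟩, fun t => ?_⟩
  · refine ⟨continuousOn_const, fun T _ => MemLp.zero, ?_, ?_, ?_, ?_⟩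
    · filter_upwards with t
      filter_upwards [Lp.coeFn_zero ℝ 2 μ01] with x hx
      refine ⟨0, ?_, ?_⟩
      · rw [hx]; simp [heaviside]
      · rw [hx]; simp
    · filter_upwards with t using dom_zero
    · filter_upwards with t; simp
    · intro T1 T2 _ _
      refine ⟨intervalIntegrable_const, fun t _ => by simp⟩
  · filter_upwards [Lp.coeFn_zero ℝ 2 μ01] with x hx
    rw [hx]; simp

lemma IsPositive.ae {v : Hsp} (h : IsPositive v) : ∀ᵐ x ∂μ01, 0 < v x := by
  obtain ⟨vt, _, h1, h2⟩ := h
  filter_upwards [h1, ae_Ioo] with x a b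
  rw [← a]; exact h2 x b

lemma IsPositive.translate {ξ : C(ℝ, ℝ × ℝ) → ℝ → Hsp} {σ0 σ : C(ℝ, ℝ × ℝ)}
    (hξ : ∀ σ ∈ hullSet σ0,
      IsNonnegCompleteTraj σ (ξ σ) ∧ BddTraj (ξ σ) ∧
      (∀ t : ℝ, IsPositive (ξ σ t)) ∧
      ∀ γ : ℝ → Hsp, IsNonnegCompleteTraj σ γ → BddTraj γ →
        (∀ t : ℝ, IsPositive (γ t)) → ∀ t : ℝ, γ t = ξ σ t) (hσ : σ ∈ hullSet σ0) (t : ℝ) :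
    ξ (translateCM t σ) 0 = ξ σ t := by
  obtain ⟨h1, ⟨M, h2⟩, h3, _⟩ := hξ σ hσ
  have := (hξ _ (hull_translate hσ t)).2.2.2 (fun s => ξ σ (s + t)) (traj_translate h1 t) ⟨M, fun s => h2 _⟩
    (fun s => h3 _) 0
  rw [← this, zero_add]


lemma exp_lim {δ : ℝ} (hδ : 0 < δ) (C b : ℝ) :
    Filter.Tendsto (fun a => Real.exp (-δ * (b - a)) * C) Filter.atBot (nhds 0) := by
  have : Filter.Tendsto (fun a : ℝ => -δ * (b - a)) Filter.atBot Filter.atBot := by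
    have h1 : Filter.Tendsto (fun a : ℝ => δ * a) Filter.atBot Filter.atBot :=
      Filter.tendsto_id.const_mul_atBot hδ
    have := Filter.tendsto_atBot_add_const_right Filter.atBot (-δ * b) h1
    refine this.congr fun a => ?_
    ring
  simpa using (Real.tendsto_exp_atBot.comp this).mul_const C

lemma exp_lim' {δ : ℝ} (hδ : 0 < δ) (C a : ℝ) :
    Filter.Tendsto (fun b => Real.exp (-δ * (b - a)) * C) Filter.atTop (nhds 0) := by
  have : Filter.Tendsto (fun b : ℝ => -δ * (b - a)) Filter.atTop Filter.atBot := by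
    have h1 : Filter.Tendsto (fun a : ℝ => -δ * a) Filter.atTop Filter.atBot :=
      Filter.tendsto_id.const_mul_atTop_of_neg (by linarith)
    have := Filter.tendsto_atBot_add_const_right Filter.atTop (δ * a) h1
    refine this.congr fun b => ?_
    ring
  simpa using (Real.tendsto_exp_atBot.comp this).mul_const C

def lowc (b0 : ℝ) : ℝ := b0 * inner ℝ sinH oneH / Real.pi^2 / (‖sinH‖ + 1)

lemma lowc_pos {b0 : ℝ} (h : 0 < b0) : 0 < lowc b0 := by
  have := inner_sin_one
  have := Real.pi_pos
  unfold lowc; positivity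

lemma traj_bounds {σ : C(ℝ, ℝ × ℝ)} {γ : ℝ → Hsp} (h : IsNonnegCompleteTraj σ γ) (hbd : BddTraj γ)
    {b0 b1 ω0 ω1 : ℝ} (hb0 : 0 < b0) (hω0 : 0 ≤ ω0) (hω1 : ω1 < Real.pi^2)
    (hσ : ∀ t, σ t ∈ Icc b0 b1 ×ˢ Icc ω0 ω1) (hp : ∀ t, ∀ᵐ x ∂μ01, 0 < γ t x) (t : ℝ) :
    lowc b0 ≤ ‖γ t‖ ∧ ‖γ t‖ ≤ b1 / (Real.pi^2 - ω1) := by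
  have hπ := Real.pi_pos
  have hδ : 0 < Real.pi^2 - ω1 := by linarith
  have hb1 : 0 ≤ b1 := hb0.le.trans ((hσ 0).1.1.trans (hσ 0).1.2)
  obtain ⟨M, hM⟩ := hbd
  constructor
  · have key : ∀ a < t, b0 * inner ℝ sinH oneH / Real.pi^2 * (1 - Real.exp (-Real.pi^2 * (t-a))) ≤ inner ℝ sinH (γ t) := by
      intro a ha
      obtain ⟨u', uxx, r, hpth, hg⟩ := extract h ha
      apply lower hpth (inner_mono_nonneg sinH_nonneg (h.2 a)) (by have := inner_sin_one; positivity)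
      filter_upwards [hg] with s hs hsm
      refine ⟨uxx s, (hs hsm).dom.sin, ?_⟩
      rw [(hs hsm).full (hp s)]
      have e : uxx s + (σ s).2 • γ s + (σ s).1 • oneH - uxx s = (σ s).2 • γ s + (σ s).1 • oneH := by abel
      rw [e, inner_add_right, inner_smul_right, inner_smul_right]
      have h1 : 0 ≤ (σ s).2 * inner ℝ sinH (γ s) :=
        mul_nonneg (hω0.trans (hσ s).2.1) (inner_mono_nonneg sinH_nonneg (h.2 s))
      have h2 : b0 * inner ℝ sinH oneH ≤ (σ s).1 * inner ℝ sinH oneH :=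
        mul_le_mul_of_nonneg_right (hσ s).1.1 inner_sin_one.le
      linarith
    have lim : Filter.Tendsto (fun a => b0 * inner ℝ sinH oneH / Real.pi^2 * (1 - Real.exp (-Real.pi^2 * (t-a)))) Filter.atBot
        (nhds (b0 * inner ℝ sinH oneH / Real.pi^2)) := by
      have := ((exp_lim (show 0 < Real.pi^2 by positivity) 1 t).const_sub 1).const_mul (b0 * inner ℝ sinH oneH / Real.pi^2)
      simpa using this
    have l1 := le_of_tendsto lim (by filter_upwards [Filter.eventually_lt_atBot t] with a ha using key a ha)
    have l2 := real_inner_le_norm sinH (γ t)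
    rw [lowc, div_le_iff₀ (by positivity)]
    nlinarith [norm_nonneg (γ t)]
  · have key : ∀ a < t, ‖γ t‖^2 ≤ Real.exp (-(Real.pi^2 - ω1) * (t-a)) * M^2 + b1^2/(Real.pi^2-ω1)^2 := by
      intro a ha
      obtain ⟨u', uxx, r, hpth, hg⟩ := extract h ha
      have H : ∀ᵐ s, s ∈ Ioo a t → ∃ wxx : Hsp, inner ℝ (γ s) wxx ≤ -Real.pi^2 * ‖γ s‖^2 ∧
          u' s = wxx + (σ s).2 • γ s + (σ s).1 • oneH ∧ (σ s).2 ≤ ω1 ∧ ‖(σ s).1 • oneH‖ ≤ b1 := by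
        filter_upwards [hg] with s hs hsm
        refine ⟨uxx s, (hs hsm).dom.energy, (hs hsm).full (hp s), (hσ s).2.2, ?_⟩
        rw [norm_smul, norm_oneH, mul_one, Real.norm_eq_abs, abs_of_nonneg (hb0.le.trans (hσ s).1.1)]
        exact (hσ s).1.2
      have hMa : ‖γ a‖^2 ≤ M^2 := pow_le_pow_left₀ (norm_nonneg _) (hM a) 2
      generalize hd : Real.pi^2 - ω1 = δ at hδ ⊢
      have := gronwall (w := γ) (w' := u') (F := fun s => (σ s).1 • oneH) (om := fun s => (σ s).2) (ω1 := ω1) (η := b1)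
        (δ := δ) hpth hδ hd.symm H
      refine this.trans ?_
      gcongr
    have lim := (exp_lim hδ (M^2) t).add_const (b1^2/(Real.pi^2-ω1)^2)
    rw [zero_add] at lim
    have l1 := ge_of_tendsto lim (by filter_upwards [Filter.eventually_lt_atBot t] with a ha using key a ha)
    rw [← div_pow] at l1
    exact (sq_le_sq₀ (norm_nonneg _) (by positivity)).1 l1



def Xi (σ0 : C(ℝ, ℝ × ℝ)) (ξ : C(ℝ, ℝ × ℝ) → ℝ → Hsp) : Prop := ∀ σ ∈ hullSet σ0,
      IsNonnegCompleteTraj σ (ξ σ) ∧ BddTraj (ξ σ) ∧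
      (∀ t : ℝ, IsPositive (ξ σ t)) ∧
      ∀ γ : ℝ → Hsp, IsNonnegCompleteTraj σ γ → BddTraj γ →
        (∀ t : ℝ, IsPositive (γ t)) → ∀ t : ℝ, γ t = ξ σ t

lemma xi_cont {b ω : ℝ → ℝ} {b0 b1 ω0 ω1 : ℝ} (hC : Cond1 b ω b0 b1 ω0 ω1)
    (hω1 : ω1 < Real.pi ^ 2) {σ0 : C(ℝ, ℝ × ℝ)} (hσ0 : ∀ t, σ0 t = (b t, ω t))
    {ξ : C(ℝ, ℝ × ℝ) → ℝ → Hsp} (hξ : Xi σ0 ξ) : ContinuousOn (fun σ => ξ σ 0) (hullSet σ0) := by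
  intro σ hσ
  have hδ : 0 < Real.pi^2 - ω1 := by linarith
  set M := b1 / (Real.pi^2 - ω1) with hM
  have hbd : ∀ τ ∈ hullSet σ0, ∀ t, ‖ξ τ t‖ ≤ M := fun τ hτ t =>
    (traj_bounds (hξ τ hτ).1 (hξ τ hτ).2.1 hC.b0pos hC.ω0nonneg hω1 (hull_bounds hC hσ0 hτ)
      (fun t => ((hξ τ hτ).2.2.1 t).ae) t).2
  have hM0 : 0 ≤ M := (norm_nonneg _).trans (hbd σ hσ 0)
  unfold ContinuousWithinAt
  rw [Metric.tendsto_nhds]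
  intro ε hε
  obtain ⟨a, ha0, ha⟩ : ∃ a < (0:ℝ), Real.exp (-(Real.pi^2 - ω1) * (0 - a)) * (2 * M)^2 < ε^2/2 := by
    have := (exp_lim hδ ((2*M)^2) 0).eventually (gt_mem_nhds (show (0:ℝ) < ε^2/2 by positivity))
    obtain ⟨a, h1, h2⟩ := (this.and (Filter.eventually_lt_atBot 0)).exists
    exact ⟨a, h2, h1⟩
  obtain ⟨η, hη, hη2⟩ : ∃ η > (0:ℝ), (η + η * M)^2/(Real.pi^2 - ω1)^2 < ε^2/2 := by
    have hc : Filter.Tendsto (fun η : ℝ => (η + η * M)^2/(Real.pi^2 - ω1)^2) (nhdsWithin 0 (Ioi 0)) (nhds 0) := by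
      have : Continuous (fun η : ℝ => (η + η * M)^2/(Real.pi^2 - ω1)^2) := by fun_prop
      have := this.tendsto 0
      simp only [zero_mul, add_zero, ne_eq, OfNat.ofNat_ne_zero, not_false_eq_true, zero_pow, zero_div] at this
      exact this.mono_left nhdsWithin_le_nhds
    obtain ⟨η, h1, h2⟩ := ((hc.eventually (gt_mem_nhds (show (0:ℝ) < ε^2/2 by positivity))).and self_mem_nhdsWithin).exists
    exact ⟨η, h2, h1⟩
  have hu := ContinuousMap.tendsto_iff_forall_isCompact_tendstoUniformlyOn.1
    (Filter.tendsto_id (α := C(ℝ, ℝ × ℝ)) (x := nhds σ)) (Icc a 0) isCompact_Icc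
  rw [Metric.tendstoUniformlyOn_iff] at hu
  filter_upwards [(hu η hη).filter_mono nhdsWithin_le_nhds, self_mem_nhdsWithin] with τ hτ hτm
  have hcl : ∀ t ∈ Ioo a 0, |(τ t).1 - (σ t).1| ≤ η ∧ |(τ t).2 - (σ t).2| ≤ η := by
    intro t ht
    have := (hτ t (Ioo_subset_Icc_self ht)).le
    rw [dist_comm] at this
    exact ⟨((Real.dist_eq _ _).symm.le.trans (le_max_left _ _)).trans this,
      ((Real.dist_eq _ _).symm.le.trans (le_max_right _ _)).trans this⟩
  have est := diff_est (hξ τ hτm).1 (hξ σ hσ).1 (η := η) (η' := η) (M := M) ha0 hω1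
    (fun t _ => (hull_bounds hC hσ0 hτm t).2.2)
    (by filter_upwards with t _ using ((hξ τ hτm).2.2.1 t).ae)
    (by filter_upwards with t _ using ((hξ σ hσ).2.2.1 t).ae)
    (fun t ht => (hcl t ht).1) (fun t ht => (hcl t ht).2) (hbd σ hσ)
  have h2 : ‖ξ τ a - ξ σ a‖^2 ≤ (2*M)^2 := by
    apply pow_le_pow_left₀ (norm_nonneg _)
    refine (norm_sub_le _ _).trans ?_
    linarith [hbd τ hτm a, hbd σ hσ a]
  have h3 := mul_le_mul_of_nonneg_left h2 (Real.exp_pos (-(Real.pi^2 - ω1) * (0 - a))).le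
  rw [dist_eq_norm]
  exact lt_of_pow_lt_pow_left₀ 2 hε.le (by linarith)

lemma tendsto_nhdsSet_of_close {X : Type*} [UniformSpace X] {K : Set X} (hK : IsCompact K) {p q : ℝ → X}
    {l : Filter ℝ} (hq : ∀ t, q t ∈ K) (h : Filter.Tendsto (fun t => (q t, p t)) l (uniformity X)) :
    Filter.Tendsto p l (nhdsSet K) := by
  rw [(IsCompact.nhdsSet_basis_uniformity (uniformity X).basis_sets hK).tendsto_right_iff]
  intro V hV
  filter_upwards [h hV] with t ht
  exact mem_iUnion₂.2 ⟨q t, hq t, ht⟩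

lemma dichot {b ω : ℝ → ℝ} {b0 b1 ω0 ω1 : ℝ} (hC : Cond1 b ω b0 b1 ω0 ω1)
    (hω1 : ω1 < Real.pi ^ 2) {σ0 : C(ℝ, ℝ × ℝ)} (hσ0 : ∀ t, σ0 t = (b t, ω t))
    {ξ : C(ℝ, ℝ × ℝ) → ℝ → Hsp} (hξ : Xi σ0 ξ) {σ : C(ℝ, ℝ × ℝ)} (hσ : σ ∈ hullSet σ0) {γ : ℝ → Hsp}
    (h : IsNonnegCompleteTraj σ γ) (hbd : BddTraj γ) :
    (∀ t, γ t = ξ σ t) ∨ (∀ t, γ t = 0) ∨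
      ((∃ N, ∀ t < N, γ t = 0) ∧ Filter.Tendsto (fun t => ‖γ t - ξ σ t‖) Filter.atTop (nhds 0)) := by
  have hδ : 0 < Real.pi^2 - ω1 := by linarith
  have hB := hull_bounds hC hσ0 hσ
  obtain ⟨k, ⟨M, hM⟩, kp, _⟩ := hξ σ hσ
  obtain ⟨M', hM'⟩ := hbd
  have est : ∀ t0, γ t0 ≠ 0 → ∀ t, t0 < t → ∀ a, t0 ≤ a → a < t →
      ‖γ t - ξ σ t‖^2 ≤ Real.exp (-(Real.pi^2 - ω1) * (t - a)) * (M' + M)^2 := by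
    intro t0 h0 t ht a ha hat
    have hpos := posi h (fun t => hC.b0pos.le.trans (hB t).1.1) (fun t => hC.ω0nonneg.trans (hB t).2.1) ht h0
    have := diff_est h k (η := 0) (η' := 0) (M := M) hat hω1 (fun t _ => (hB t).2.2)
      (by filter_upwards [hpos] with s hs hsm using hs ⟨ha.trans_lt hsm.1, hsm.2⟩)
      (by filter_upwards with t _ using (kp t).ae) (by simp) (by simp) hM
    have h2 : ‖γ a - ξ σ a‖^2 ≤ (M' + M)^2 := by
      apply pow_le_pow_left₀ (norm_nonneg _)
      refine (norm_sub_le _ _).trans ?_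
      linarith [hM a, hM' a]
    have h3 := mul_le_mul_of_nonneg_left h2 (Real.exp_pos (-(Real.pi^2 - ω1) * (t - a))).le
    simp only [zero_mul, add_zero, ne_eq, OfNat.ofNat_ne_zero, not_false_eq_true, zero_pow, zero_div] at this
    exact this.trans h3
  by_cases hA : ∀ t, γ t = 0
  · exact Or.inr (Or.inl hA)
  push Not at hA
  obtain ⟨t0, h0⟩ := hA
  by_cases hN : ∃ N, ∀ t < N, γ t = 0
  · refine Or.inr (Or.inr ⟨hN, ?_⟩)
    have lim := exp_lim' hδ ((M' + M)^2) t0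
    have l2 : Filter.Tendsto (fun t => ‖γ t - ξ σ t‖^2) Filter.atTop (nhds 0) := by
      refine tendsto_of_tendsto_of_tendsto_of_le_of_le' tendsto_const_nhds lim ?_ ?_
      · filter_upwards with t using sq_nonneg _
      · filter_upwards [Filter.eventually_gt_atTop t0] with t ht using est t0 h0 t ht t0 le_rfl ht
    have := l2.sqrt
    simpa using this
  · left
    push Not at hN
    intro t
    have l := ge_of_tendsto (exp_lim hδ ((M' + M)^2) t) (b := ‖γ t - ξ σ t‖^2) (by
      filter_upwards [Filter.eventually_lt_atBot t] with a ha
      obtain ⟨s, hs, hs0⟩ := hN a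
      exact est s hs0 t (hs.trans ha) a hs.le ha)
    have := pow_eq_zero_iff (two_ne_zero) |>.1 (le_antisymm l (sq_nonneg _))
    exact sub_eq_zero.1 (norm_eq_zero.1 this)

/-- under (Cond1), `ω₁ < π²` and uniform continuity of `b, ω`, the
skew product semiflow `Π⁺` on `𝒳⁺ = H⁺ × Σ` is dynamically gradient with respect
to the disjoint family of isolated weakly invariant sets `ℳ = {M₁, M₂}`, where
`M₁ = {(ξ_{M,σ}(0),σ) : σ ∈ Σ}` and `M₂ = {(0,σ) : σ ∈ Σ}`: the sets `M₁, M₂`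
are weakly invariant, can be separated by disjoint open neighborhoods, are
isolated, and every bounded complete trajectory of `𝒦⁺` either lies entirely in
`M₁`, or entirely in `M₂`, or converges to `M₁` as `t → +∞` and to `M₂`
as `t → −∞`. -/
theorem statement19
    (b ω : ℝ → ℝ) (b0 b1 ω0 ω1 : ℝ) (hC : Cond1 b ω b0 b1 ω0 ω1)
    (hω1 : ω1 < Real.pi ^ 2)
    (hbu : UniformContinuous b) (hωu : UniformContinuous ω)
    (σ0 : C(ℝ, ℝ × ℝ)) (hσ0 : ∀ t, σ0 t = (b t, ω t))
    (ξ : C(ℝ, ℝ × ℝ) → ℝ → Hsp)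
    (hξ : ∀ σ ∈ hullSet σ0,
      IsNonnegCompleteTraj σ (ξ σ) ∧ BddTraj (ξ σ) ∧
      (∀ t : ℝ, IsPositive (ξ σ t)) ∧
      ∀ γ : ℝ → Hsp, IsNonnegCompleteTraj σ γ → BddTraj γ →
        (∀ t : ℝ, IsPositive (γ t)) → ∀ t : ℝ, γ t = ξ σ t) :
    -- the two Morse sets
    (let M₁ : Set (Hsp × C(ℝ, ℝ × ℝ)) :=
        {p | ∃ σ ∈ hullSet σ0, p = (ξ σ 0, σ)}
     let M₂ : Set (Hsp × C(ℝ, ℝ × ℝ)) :=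
        {p | ∃ σ ∈ hullSet σ0, p = ((0 : Hsp), σ)}
     -- `M₁` and `M₂` are weakly invariant
     (∀ i : Fin 2, ∀ p ∈ (if i = 0 then M₁ else M₂),
        ∃ σ ∈ hullSet σ0, ∃ γ : ℝ → Hsp,
          IsNonnegCompleteTraj σ γ ∧ BddTraj γ ∧ (γ 0, σ) = p ∧
          ∀ t : ℝ, (γ t, translateCM t σ) ∈ (if i = 0 then M₁ else M₂)) ∧
     -- they are disjoint (they have disjoint open neighborhoods)
     (∃ U₁ U₂ : Set (Hsp × C(ℝ, ℝ × ℝ)), IsOpen U₁ ∧ IsOpen U₂ ∧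
        Disjoint U₁ U₂ ∧ M₁ ⊆ U₁ ∧ M₂ ⊆ U₂) ∧
     -- they are isolated: maximal weakly invariant sets in some open neighborhood
     (∀ i : Fin 2, ∃ U : Set (Hsp × C(ℝ, ℝ × ℝ)), IsOpen U ∧
        (if i = 0 then M₁ else M₂) ⊆ U ∧
        ∀ σ ∈ hullSet σ0, ∀ γ : ℝ → Hsp,
          IsNonnegCompleteTraj σ γ → BddTraj γ →
          (∀ t : ℝ, (γ t, translateCM t σ) ∈ U) →
          ∀ t : ℝ, (γ t, translateCM t σ) ∈ (if i = 0 then M₁ else M₂)) ∧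
     -- dynamical gradient dichotomy
     ∀ σ ∈ hullSet σ0, ∀ γ : ℝ → Hsp,
        IsNonnegCompleteTraj σ γ → BddTraj γ →
        (∀ t : ℝ, (γ t, translateCM t σ) ∈ M₁) ∨
        (∀ t : ℝ, (γ t, translateCM t σ) ∈ M₂) ∨
        (Filter.Tendsto (fun t => (γ t, translateCM t σ)) Filter.atTop
            (nhdsSet M₁) ∧
         Filter.Tendsto (fun t => (γ t, translateCM t σ)) Filter.atBot
            (nhdsSet M₂))) := by
  have hX : Xi σ0 ξ := hξ
  have htr : ∀ σ ∈ hullSet σ0, ∀ t, ξ (translateCM t σ) 0 = ξ σ t := fun σ hσ t => IsPositive.translate hξ hσ t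
  have hc := lowc_pos hC.b0pos
  have hlow : ∀ τ ∈ hullSet σ0, ∀ t, lowc b0 ≤ ‖ξ τ t‖ := fun τ hτ t =>
    (traj_bounds (hξ τ hτ).1 (hξ τ hτ).2.1 hC.b0pos hC.ω0nonneg hω1 (hull_bounds hC hσ0 hτ)
      (fun t => ((hξ τ hτ).2.2.1 t).ae) t).1
  have hcpt := hull_compact hC hbu hωu hσ0
  intro M₁ M₂
  have hM₁ : IsCompact M₁ := by
    have := hcpt.image_of_continuousOn ((xi_cont hC hω1 hσ0 hX).prodMk continuousOn_id)
    convert this using 1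
    ext p; constructor
    · rintro ⟨σ, hσ, rfl⟩; exact ⟨σ, hσ, rfl⟩
    · rintro ⟨σ, hσ, rfl⟩; exact ⟨σ, hσ, rfl⟩
  have in1 : ∀ σ ∈ hullSet σ0, ∀ t, (ξ σ t, translateCM t σ) ∈ M₁ := fun σ hσ t =>
    ⟨translateCM t σ, hull_translate hσ t, by rw [htr σ hσ t]⟩
  have in2 : ∀ σ ∈ hullSet σ0, ∀ t, ((0 : Hsp), translateCM t σ) ∈ M₂ := fun σ hσ t =>
    ⟨translateCM t σ, hull_translate hσ t, rfl⟩
  have o1 : IsOpen {p : Hsp × C(ℝ, ℝ × ℝ) | lowc b0 / 2 < ‖p.1‖} :=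
    isOpen_lt continuous_const continuous_fst.norm
  have o2 : IsOpen {p : Hsp × C(ℝ, ℝ × ℝ) | ‖p.1‖ < lowc b0 / 2} :=
    isOpen_lt continuous_fst.norm continuous_const
  have s1 : M₁ ⊆ {p : Hsp × C(ℝ, ℝ × ℝ) | lowc b0 / 2 < ‖p.1‖} := by
    rintro _ ⟨σ, hσ, rfl⟩
    have := hlow σ hσ 0
    show lowc b0 / 2 < ‖ξ σ 0‖
    linarith
  have s2 : M₂ ⊆ {p : Hsp × C(ℝ, ℝ × ℝ) | ‖p.1‖ < lowc b0 / 2} := by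
    rintro _ ⟨σ, hσ, rfl⟩
    show ‖(0 : Hsp)‖ < lowc b0 / 2
    rw [norm_zero]; linarith
  refine ⟨?_, ⟨_, _, o1, o2, ?_, s1, s2⟩, ?_, ?_⟩
  · intro i
    fin_cases i
    · simp only [Fin.zero_eta, if_true]
      rintro _ ⟨σ, hσ, rfl⟩
      exact ⟨σ, hσ, ξ σ, (hξ σ hσ).1, (hξ σ hσ).2.1, rfl, in1 σ hσ⟩
    · simp only [Fin.mk_one, Fin.isValue, one_ne_zero, if_false]
      rintro _ ⟨σ, hσ, rfl⟩
      exact ⟨σ, hσ, fun _ => 0, traj_zero σ, ⟨0, fun t => by simp⟩, rfl, in2 σ hσ⟩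
  · rw [Set.disjoint_left]
    intro p h1 h2
    exact lt_asymm (show lowc b0 / 2 < ‖p.1‖ from h1) (show ‖p.1‖ < lowc b0 / 2 from h2)
  · intro i
    fin_cases i
    · simp only [Fin.zero_eta, if_true]
      refine ⟨_, o1, s1, ?_⟩
      intro σ hσ γ h hb hU t
      have hU' : ∀ t, lowc b0 / 2 < ‖γ t‖ := hU
      rcases dichot hC hω1 hσ0 hX hσ h hb with e | e | ⟨⟨N, e⟩, _⟩
      · rw [e t]; exact in1 σ hσ t
      · have := hU' 0
        rw [e 0, norm_zero] at this; linarith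
      · have := hU' (N - 1)
        rw [e (N - 1) (by linarith), norm_zero] at this; linarith
    · simp only [Fin.mk_one, Fin.isValue, one_ne_zero, if_false]
      refine ⟨_, o2, s2, ?_⟩
      intro σ hσ γ h hb hU t
      have hU' : ∀ t, ‖γ t‖ < lowc b0 / 2 := hU
      rcases dichot hC hω1 hσ0 hX hσ h hb with e | e | ⟨_, e⟩
      · have := hU' 0
        rw [e 0] at this; linarith [hlow σ hσ 0]
      · rw [e t]; exact in2 σ hσ t
      · obtain ⟨s, hs⟩ := (e.eventually (gt_mem_nhds (show (0:ℝ) < lowc b0 / 2 by linarith))).exists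
        have h1 := hU' s
        have h2 := hlow σ hσ s
        have h3 := norm_sub_norm_le (ξ σ s) (γ s)
        rw [norm_sub_rev] at h3
        linarith
  · intro σ hσ γ h hb
    rcases dichot hC hω1 hσ0 hX hσ h hb with e | e | ⟨⟨N, e⟩, e2⟩
    · left; intro t; rw [e t]; exact in1 σ hσ t
    · right; left; intro t; rw [e t]; exact in2 σ hσ t
    · right; right
      constructor
      · refine tendsto_nhdsSet_of_close hM₁ (q := fun t => (ξ σ t, translateCM t σ)) (in1 σ hσ) ?_
        rw [uniformity_prod, Filter.tendsto_inf, Filter.tendsto_comap_iff, Filter.tendsto_comap_iff]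
        refine ⟨?_, tendsto_diag_uniformity _ _⟩
        rw [tendsto_uniformity_iff_dist_tendsto_zero]
        refine e2.congr fun t => ?_
        simp only [Function.comp_def]
        rw [dist_comm, dist_eq_norm]
      · refine Filter.Tendsto.mono_right ?_ (principal_le_nhdsSet)
        rw [Filter.tendsto_principal]
        filter_upwards [Filter.eventually_lt_atBot N] with t ht
        rw [e t ht]; exact in2 σ hσ t



end
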